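/- For x → ∞, the sum ∑_{n ≤ x} ⌊x/n⌋ equals x·log x + (2γ − 1)x + O(x^{1/3}), where γ is the Euler–Mascheroni constant. -/

import Mathlib

open Filter Finset

/-!
Dirichlet's hyperbola method reduces the error term to the sum of `ψ(x / n)` over `n ≤ √x`, where
`ψ` is the sawtooth function, and the trivial bound `√x` for this sum has to be improved. Comparing
`ψ` with a difference quotient of the second Bernoulli polynomial at distance `δ`, whose Fourier
series converges absolutely, bounds the sum over a dyadic block `n ≍ a` by `δ a` plus weighted
exponential sums with phases `h x / n`.

With `A = h x`, Poisson summation and stationary phase turn the sum of `e(A / n)` over the block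
into a dual sum of `ν ^ (-3/4) e(2 √(A ν))` over `ν ≍ A / a²`. The dual sum is estimated by the
fifth difference test, obtained from the second difference test by three applications of van der
Corput's inequality. The resulting exponent pair `(2 / 5, 21 / 40)` and the choice `δ = x ^ t / a`
give every exponent larger than `37 / 112`, which is just below `1 / 3`.
-/

namespace DivisorProblem

/-! ### Exponential sums with controlled differences -/

/-- The additive character `t ↦ exp (2πit)` of `ℝ`, as a complex number rather than as an element
of `Circle`, since it is summed and integrated throughout. -/
noncomputable def e (t : ℝ) : ℂ := (Real.fourierChar t : Circle)

lemma e_eq_exp (t : ℝ) : e t = Complex.exp ((2 * Real.pi * t : ℝ) * Complex.I) :=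
  Real.fourierChar_apply t

lemma norm_e (t : ℝ) : ‖e t‖ = 1 := Circle.norm_coe _

lemma e_add (s t : ℝ) : e (s + t) = e s * e t := by
  rw [e, AddChar.map_add_eq_mul, Circle.coe_mul, e, e]

lemma conj_e (t : ℝ) : (starRingEnd ℂ) (e t) = e (-t) := by
  rw [e, e, AddChar.map_neg_eq_inv, Circle.coe_inv_eq_conj]

lemma e_int (k : ℤ) : e k = 1 := by
  rw [e_eq_exp, Complex.exp_eq_one_iff]
  exact ⟨k, by push_cast; ring⟩

lemma norm_sum_e_le_card {ι : Type*} (s : Finset ι) (f : ι → ℝ) :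
    ‖∑ n ∈ s, e (f n)‖ ≤ s.card := by
  simpa [norm_e] using norm_sum_le s fun n => e (f n)

lemma norm_e_sub_one (t : ℝ) : ‖e t - 1‖ = 2 * |Real.sin (Real.pi * t)| := by
  rw [e_eq_exp, mul_comm, Complex.norm_exp_I_mul_ofReal_sub_one, norm_mul, Real.norm_ofNat,
    Real.norm_eq_abs, mul_assoc, mul_div_cancel_left₀ _ two_ne_zero]

lemma inv_e_sub_one {t : ℝ} (ht : Real.sin (Real.pi * t) ≠ 0) :
    (e t - 1)⁻¹ = -(1 / 2) - (Real.cot (Real.pi * t) / 2 : ℝ) * Complex.I := by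
  have hne : e t - 1 ≠ 0 := by
    rw [← norm_ne_zero_iff, norm_e_sub_one]
    positivity
  have hcot : (Real.cot (Real.pi * t) : ℂ) = (e t + 1) / (Complex.I * (1 - e t)) := by
    have hexp : e t = Complex.exp (2 * Real.pi * Complex.I * t) := by
      rw [e_eq_exp]
      congr 1
      push_cast
      ring
    rw [Complex.ofReal_cot, hexp, Complex.ofReal_mul, Complex.cot_pi_eq_exp_ratio]
  have hne' : 1 - e t ≠ 0 := by rwa [← neg_sub, neg_ne_zero]
  rw [Complex.ofReal_div, hcot, Complex.ofReal_ofNat]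
  field_simp
  ring

lemma two_mul_le_sin_pi_mul {θ t : ℝ} (hθ : 0 ≤ θ) (h₁ : θ ≤ t) (h₂ : t ≤ 1 - θ) :
    2 * θ ≤ Real.sin (Real.pi * t) := by
  have hjordan {s : ℝ} (hs : 0 ≤ s) (hs' : s ≤ 1 / 2) : 2 * s ≤ Real.sin (Real.pi * s) := by
    have h := Real.mul_le_sin (x := Real.pi * s) (by positivity) (by nlinarith [Real.pi_pos])
    rwa [← mul_assoc, div_mul_cancel₀ _ Real.pi_ne_zero] at h
  rcases le_total t (1 / 2) with h | h
  · linarith [hjordan (hθ.trans h₁) h]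
  · have := hjordan (s := 1 - t) (by linarith) (by linarith)
    have hsin : Real.sin (Real.pi * (1 - t)) = Real.sin (Real.pi * t) := by
      rw [mul_sub, mul_one, Real.sin_pi_sub]
    linarith

lemma abs_cot_pi_mul_le {θ t : ℝ} (hθ : 0 < θ) (h₁ : θ ≤ t) (h₂ : t ≤ 1 - θ) :
    |Real.cot (Real.pi * t)| ≤ 1 / (2 * θ) := by
  have h := two_mul_le_sin_pi_mul hθ.le h₁ h₂
  rw [Real.cot_eq_cos_div_sin, abs_div, abs_of_pos (a := Real.sin _) (by linarith)]
  exact div_le_div₀ zero_le_one (Real.abs_cos_le_one _) (by positivity) h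

lemma antitoneOn_cot_pi_mul : AntitoneOn (fun t => Real.cot (Real.pi * t)) (Set.Ioo 0 1) := by
  have hsin {t : ℝ} (ht : t ∈ Set.Ioo (0 : ℝ) 1) : 0 < Real.sin (Real.pi * t) :=
    Real.sin_pos_of_pos_of_lt_pi (mul_pos Real.pi_pos ht.1)
      (mul_lt_of_lt_one_right Real.pi_pos ht.2)
  intro s hs t ht hst
  simp only [Real.cot_eq_cos_div_sin]
  rw [div_le_div_iff₀ (hsin ht) (hsin hs), ← sub_nonneg]
  have h : 0 ≤ Real.sin (Real.pi * t - Real.pi * s) :=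
    Real.sin_nonneg_of_nonneg_of_le_pi (by nlinarith [Real.pi_pos])
      (by nlinarith [Real.pi_pos, ht.2, hs.1])
  rw [Real.sin_sub] at h
  linarith

lemma norm_sum_mul_sub_sub_le (a b : ℕ → ℂ) (hb : ∀ n, ‖b n‖ ≤ 1) {p q : ℕ} (hpq : p ≤ q) :
    ‖∑ n ∈ Ico p (q + 1), a n * (b (n + 1) - b n) - a q * b (q + 1)‖ ≤
      ‖a p‖ + ∑ n ∈ Ico p q, ‖a n - a (n + 1)‖ := by
  have hmul (z : ℂ) (n : ℕ) : ‖z * b n‖ ≤ ‖z‖ := by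
    rw [norm_mul]
    exact mul_le_of_le_one_right (norm_nonneg z) (hb n)
  induction q, hpq using Nat.le_induction with
  | base =>
    rw [Nat.Ico_succ_singleton, sum_singleton, Ico_self, sum_empty, add_zero, mul_sub,
      sub_sub_cancel_left, norm_neg]
    exact hmul _ _
  | succ q hpq ih =>
    rw [sum_Ico_succ_top (by lia), sum_Ico_succ_top hpq fun n => ‖a n - a (n + 1)‖, ← add_assoc]
    calc _ = ‖(∑ n ∈ Ico p (q + 1), a n * (b (n + 1) - b n) - a q * b (q + 1)) +
          (a q - a (q + 1)) * b (q + 1)‖ := by congr 1; ring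
      _ ≤ _ := (norm_add_le _ _).trans (add_le_add ih (hmul _ _))

lemma norm_inv_e_sub_one_le {θ t : ℝ} (hθ : 0 < θ) (h₁ : θ ≤ t) (h₂ : t ≤ 1 - θ) :
    ‖(e t - 1)⁻¹‖ ≤ 1 / (4 * θ) := by
  rw [norm_inv, norm_e_sub_one, ← one_div]
  refine one_div_le_one_div_of_le (by positivity) ?_
  linarith [two_mul_le_sin_pi_mul hθ.le h₁ h₂, le_abs_self (Real.sin (Real.pi * t))]

lemma sum_norm_inv_e_sub_one_sub_le {d : ℕ → ℝ} {p q : ℕ} {θ : ℝ} (hθ : 0 < θ) (hpq : p ≤ q)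
    (hmem : ∀ n ∈ Set.Icc p q, d n ∈ Set.Icc θ (1 - θ)) (hmono : MonotoneOn d (Set.Icc p q)) :
    ∑ n ∈ Ico p q, ‖(e (d n) - 1)⁻¹ - (e (d (n + 1)) - 1)⁻¹‖ ≤ 1 / (2 * θ) := by
  have hsin : ∀ n ∈ Set.Icc p q, Real.sin (Real.pi * d n) ≠ 0 := fun n hn => by
    linarith [two_mul_le_sin_pi_mul hθ.le (hmem n hn).1 (hmem n hn).2]
  have hIoo : ∀ n ∈ Set.Icc p q, d n ∈ Set.Ioo (0 : ℝ) 1 := fun n hn =>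
    ⟨by linarith [(hmem n hn).1], by linarith [(hmem n hn).2]⟩
  have hcot : ∀ n ∈ Set.Icc p q, |Real.cot (Real.pi * d n)| ≤ 1 / (2 * θ) := fun n hn =>
    abs_cot_pi_mul_le hθ (hmem n hn).1 (hmem n hn).2
  have hstep : ∀ n ∈ Ico p q, ‖(e (d n) - 1)⁻¹ - (e (d (n + 1)) - 1)⁻¹‖ =
      -(Real.cot (Real.pi * d (n + 1)) / 2) - -(Real.cot (Real.pi * d n) / 2) := fun n hn => by
    rw [mem_Ico] at hn
    have hn₁ : n ∈ Set.Icc p q := ⟨hn.1, by lia⟩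
    have hn₂ : n + 1 ∈ Set.Icc p q := ⟨by lia, by lia⟩
    have hanti := antitoneOn_cot_pi_mul (hIoo _ hn₁) (hIoo _ hn₂) (hmono hn₁ hn₂ n.le_succ)
    rw [inv_e_sub_one (hsin _ hn₁), inv_e_sub_one (hsin _ hn₂), sub_sub_sub_cancel_left,
      ← sub_mul, ← Complex.ofReal_sub, norm_mul, Complex.norm_I, mul_one, Complex.norm_real,
      Real.norm_eq_abs, abs_of_nonpos] <;> linarith
  rw [sum_congr rfl hstep, sum_Ico_sub (fun n => -(Real.cot (Real.pi * d n) / 2)) hpq]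
  linarith [(abs_le.1 (hcot p ⟨le_rfl, hpq⟩)).2, (abs_le.1 (hcot q ⟨hpq, le_rfl⟩)).1]

/-- The **Kusmin–Landau inequality**. Since `(e t - 1)⁻¹ = -1 / 2 - i cot (πt) / 2` and `cot` is
monotone, the total variation produced by summation by parts telescopes. -/
lemma norm_sum_e_le_of_fwdDiff_monotoneOn {f : ℕ → ℝ} {p q : ℕ} {k : ℤ} {θ : ℝ} (hθ : 0 < θ)
    (hmem : ∀ n ∈ Set.Ico p q, fwdDiff 1 f n ∈ Set.Icc (k + θ) (k + 1 - θ))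
    (hmono : MonotoneOn (fwdDiff 1 f) (Set.Ico p q)) :
    ‖∑ n ∈ Ico p q, e (f n)‖ ≤ 1 / θ := by
  rcases le_or_gt q p with hqp | hpq
  · rw [Ico_eq_empty_of_le hqp, sum_empty, norm_zero]
    positivity
  obtain ⟨q, rfl⟩ := Nat.exists_eq_succ_of_ne_zero hpq.ne_bot
  have hpq : p ≤ q := Nat.lt_succ_iff.1 hpq
  have hIcc : ∀ n ∈ Set.Icc p q, n ∈ Set.Ico p (q + 1) := fun n hn => ⟨hn.1, Nat.lt_succ_of_le hn.2⟩
  set d : ℕ → ℝ := fun n => fwdDiff 1 f n - k with hd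
  have hd_mem : ∀ n ∈ Set.Icc p q, d n ∈ Set.Icc θ (1 - θ) := fun n hn => by
    obtain ⟨h₁, h₂⟩ := hmem n (hIcc n hn)
    exact ⟨by simp only [hd]; linarith, by simp only [hd]; linarith⟩
  have hd_mono : MonotoneOn d (Set.Icc p q) := fun m hm n hn h =>
    sub_le_sub_right (hmono (hIcc m hm) (hIcc n hn) h) _
  have hinv : ∀ n ∈ Set.Icc p q, ‖(e (d n) - 1)⁻¹‖ ≤ 1 / (4 * θ) := fun n hn =>
    norm_inv_e_sub_one_le hθ (hd_mem n hn).1 (hd_mem n hn).2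
  have hterm : ∀ n ∈ Ico p (q + 1), e (f n) = (e (d n) - 1)⁻¹ * (e (f (n + 1)) - e (f n)) := by
    intro n hn
    obtain ⟨h₁, h₂⟩ := hd_mem n ⟨(mem_Ico.1 hn).1, Nat.lt_succ_iff.1 (mem_Ico.1 hn).2⟩
    have hne : e (d n) - 1 ≠ 0 := by
      have hsin := two_mul_le_sin_pi_mul hθ.le h₁ h₂
      rw [← norm_ne_zero_iff, norm_e_sub_one, abs_of_pos] <;> linarith
    have hf : f (n + 1) = f n + d n + k := by simp only [hd, fwdDiff]; ring
    rw [hf, e_add, e_int, mul_one, e_add, ← mul_sub_one, mul_comm (e (f n)),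
      inv_mul_cancel_left₀ hne]
  have hparts := norm_sum_mul_sub_sub_le (fun n => (e (d n) - 1)⁻¹) (fun n => e (f n))
    (fun n => (norm_e _).le) hpq
  rw [← sum_congr rfl hterm] at hparts
  have hlast : ‖(e (d q) - 1)⁻¹ * e (f (q + 1))‖ ≤ 1 / (4 * θ) := by
    rw [norm_mul, norm_e, mul_one]
    exact hinv q ⟨hpq, le_rfl⟩
  calc _ ≤ _ := norm_le_norm_sub_add _ ((e (d q) - 1)⁻¹ * e (f (q + 1)))
    _ ≤ 1 / (4 * θ) + 1 / (2 * θ) + 1 / (4 * θ) := by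
      gcongr
      exact hparts.trans (add_le_add (hinv p ⟨le_rfl, hpq⟩)
        (sum_norm_inv_e_sub_one_sub_le hθ hpq hd_mem hd_mono))
    _ = 1 / θ := by field_simp; norm_num

lemma exists_filter_lt_eq_range {g : ℕ → ℝ} {L : ℕ} (hg : MonotoneOn g (Set.Iio L)) (c : ℝ) :
    ∃ r ≤ L, {n ∈ range L | g n < c} = range r := by
  classical
  have hex : ∃ r, L ≤ r ∨ c ≤ g r := ⟨L, Or.inl le_rfl⟩
  refine ⟨Nat.find hex, Nat.find_min' hex (Or.inl le_rfl), ?_⟩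
  ext n
  simp only [mem_filter, mem_range]
  refine ⟨fun ⟨hn, hlt⟩ => ?_, fun hn => ?_⟩
  · by_contra! h
    rcases Nat.find_spec hex with h' | h'
    · lia
    · exact (h'.trans (hg (lt_of_le_of_lt h hn) hn h)).not_gt hlt
  · simpa only [not_or, not_le] using Nat.find_min hex hn

lemma exists_filter_mem_Ico_eq_Ico {g : ℕ → ℝ} {L : ℕ} (hg : MonotoneOn g (Set.Iio L)) (a b : ℝ) :
    ∃ p, ∃ q ≤ L, {n ∈ range L | g n ∈ Set.Ico a b} = Ico p q := by
  obtain ⟨p, -, hp⟩ := exists_filter_lt_eq_range hg a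
  obtain ⟨q, hq, hq'⟩ := exists_filter_lt_eq_range hg b
  refine ⟨p, q, hq, ?_⟩
  ext n
  have h₁ := congrArg (n ∈ ·) hp
  have h₂ := congrArg (n ∈ ·) hq'
  simp only [mem_filter, mem_range, eq_iff_iff] at h₁ h₂
  simp only [mem_filter, mem_range, Set.mem_Ico, mem_Ico, ← h₂, ← not_lt (b := p), ← h₁]
  grind

lemma mul_le_sub_of_le_fwdDiff {g : ℕ → ℝ} {p q : ℕ} {l : ℝ} (hpq : p ≤ q)
    (hg : ∀ n ∈ Ico p q, l ≤ fwdDiff 1 g n) : ((q : ℝ) - p) * l ≤ g q - g p := by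
  have h := card_nsmul_le_sum (Ico p q) _ l hg
  rwa [Nat.card_Ico, nsmul_eq_mul, Nat.cast_sub hpq, sum_congr rfl fun n _ => fwdDiff.eq_1 1 g n,
    sum_Ico_sub _ hpq] at h

lemma card_Icc_floor_le {y z : ℝ} (hz : 0 ≤ z) : (#(Icc ⌊y⌋ ⌊y + z⌋) : ℝ) ≤ z + 2 := by
  have hfloor := Int.floor_mono (le_add_of_nonneg_right (a := y) hz)
  rw [Int.card_Icc, ← Int.cast_natCast, Int.toNat_of_nonneg (by lia)]
  push_cast
  linarith [Int.floor_le (y + z), Int.sub_one_lt_floor y]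

section SecondDifference

variable {f g : ℕ → ℝ} {L : ℕ} {l : ℝ}

lemma monotoneOn_of_le_fwdDiff (hl : 0 < l) (hg : ∀ n < L, l ≤ fwdDiff 1 g n) :
    MonotoneOn g (Set.Iio L) := fun m _ n hn hmn => by
  have h := mul_le_sub_of_le_fwdDiff hmn fun i hi => hg i ((mem_Ico.1 hi).2.trans hn)
  have hmn' : (m : ℝ) ≤ n := by exact_mod_cast hmn
  nlinarith

lemma card_filter_mem_Ico_le_of_le_fwdDiff {a b : ℝ} (hl : 0 < l) (hab : a ≤ b)
    (hg : ∀ n < L, l ≤ fwdDiff 1 g n) :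
    (#{n ∈ range L | g n ∈ Set.Ico a b} : ℝ) ≤ (b - a) / l + 1 := by
  obtain ⟨p, q, hq, hpq⟩ := exists_filter_mem_Ico_eq_Ico (monotoneOn_of_le_fwdDiff hl hg) a b
  have hmem {n : ℕ} (hn : n ∈ Ico p q) : g n ∈ Set.Ico a b := by
    rw [← hpq] at hn
    exact (mem_filter.1 hn).2
  rw [hpq, Nat.card_Ico]
  rcases le_or_gt q p with h | h
  · rw [Nat.sub_eq_zero_of_le h, Nat.cast_zero]
    have := sub_nonneg.2 hab
    positivity
  obtain ⟨m, rfl⟩ := Nat.exists_eq_add_of_lt h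
  have h₁ := mul_le_sub_of_le_fwdDiff (Nat.le_add_right p m) fun n hn =>
    hg n (by have := mem_Ico.1 hn; lia)
  have h₂ := hmem (n := p) (by simp)
  have h₃ := hmem (n := p + m) (by simp)
  rw [show p + m + 1 - p = m + 1 by lia, Nat.cast_add, Nat.cast_one, add_le_add_iff_right,
    le_div_iff₀ hl]
  push_cast at h₁
  linarith [h₂.1, h₃.2]

lemma norm_sum_filter_fwdDiff_mem_Ico_le {η a b : ℝ} (hη : 0 < η) (hab : a ≤ b)
    (hf : ∀ n < L, η ^ 2 ≤ (fwdDiff 1)^[2] f n) :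
    ‖∑ n ∈ range L with fwdDiff 1 f n ∈ Set.Ico a b, e (f n)‖ ≤ (b - a) / η ^ 2 + 1 :=
  (norm_sum_e_le_card _ _).trans (card_filter_mem_Ico_le_of_le_fwdDiff (by positivity) hab hf)

lemma norm_sum_filter_floor_fwdDiff_eq_le {η : ℝ} (hη : 0 < η) (hη₁ : η ≤ 1)
    (hf : ∀ n < L, η ^ 2 ≤ (fwdDiff 1)^[2] f n) (k : ℤ) :
    ‖∑ n ∈ range L with ⌊fwdDiff 1 f n⌋ = k, e (f n)‖ ≤ 5 / η := by
  set S : ℝ → ℝ → ℂ := fun a b => ∑ n ∈ range L with fwdDiff 1 f n ∈ Set.Ico a b, e (f n) with hS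
  have hmono : MonotoneOn (fwdDiff 1 f) (Set.Iio L) :=
    monotoneOn_of_le_fwdDiff (l := η ^ 2) (by positivity) hf
  have hsplit {a b c : ℝ} (hab : a ≤ b) (hbc : b ≤ c) : S a c = S a b + S b c := by
    simp only [hS]
    rw [← sum_union]
    · congr 1
      ext n
      simp only [mem_filter, mem_union, ← and_or_left, ← Set.mem_union,
        Set.Ico_union_Ico_eq_Ico hab hbc]
    · refine disjoint_filter.2 fun n _ h h' => ?_
      exact absurd h.2 (not_lt.2 h'.1)
  have hmiddle : ‖S (k + η / 2) (k + 1 - η / 2)‖ ≤ 1 / (η / 2) := by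
    obtain ⟨p, q, hq, hpq⟩ := exists_filter_mem_Ico_eq_Ico hmono (k + η / 2) (k + 1 - η / 2)
    simp only [hS, hpq]
    refine norm_sum_e_le_of_fwdDiff_monotoneOn (k := k) (by positivity) (fun n hn => ?_)
      (hmono.mono fun n hn => hn.2.trans_le hq)
    rw [← coe_Ico, ← hpq, mem_coe] at hn
    exact Set.Ico_subset_Icc_self (mem_filter.1 hn).2
  have hleft : ‖S k (k + η / 2)‖ ≤ (k + η / 2 - k) / η ^ 2 + 1 :=
    norm_sum_filter_fwdDiff_mem_Ico_le hη (by linarith) hf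
  have hright : ‖S (k + 1 - η / 2) (k + 1)‖ ≤ (k + 1 - (k + 1 - η / 2)) / η ^ 2 + 1 :=
    norm_sum_filter_fwdDiff_mem_Ico_le hη (by linarith) hf
  have htotal : ∑ n ∈ range L with ⌊fwdDiff 1 f n⌋ = k, e (f n) =
      S k (k + η / 2) + (S (k + η / 2) (k + 1 - η / 2) + S (k + 1 - η / 2) (k + 1)) := by
    rw [← hsplit (by linarith) (by linarith), ← hsplit (by linarith) (by linarith)]
    simp only [hS, Int.floor_eq_iff, Set.mem_Ico]
  rw [htotal]
  calc _ ≤ _ := (norm_add_le _ _).trans (add_le_add_right (norm_add_le _ _) _)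
    _ ≤ (k + η / 2 - k) / η ^ 2 + 1 + (1 / (η / 2) +
        ((k + 1 - (k + 1 - η / 2)) / η ^ 2 + 1)) := by gcongr
    _ = 3 / η + 2 := by field_simp; ring
    _ ≤ 5 / η := by
      have : 1 ≤ 1 / η := (one_le_div hη).2 hη₁
      rw [show 5 / η = 3 / η + 2 * (1 / η) by ring]
      linarith

/-- The **second difference test**: `⌊fwdDiff 1 f n⌋` takes at most `L * (α * η ^ 2) + 2` values,
and the Kusmin–Landau inequality controls the part of the sum belonging to each of them. -/
lemma norm_sum_e_le_of_fwdDiff_two_mem_Icc {α η : ℝ} (hα : 0 ≤ α) (hη : 0 < η)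
    (hf : ∀ n < L, (fwdDiff 1)^[2] f n ∈ Set.Icc (η ^ 2) (α * η ^ 2)) :
    ‖∑ n ∈ range L, e (f n)‖ ≤ 5 * (α + 2) * (L * η + 1 / η) := by
  rcases le_or_gt 1 η with hη₁ | hη₁
  · calc _ ≤ (L : ℝ) := by simpa using norm_sum_e_le_card (range L) f
      _ ≤ 1 * (L * η + 1 / η) := by
        have : 0 ≤ 1 / η := by positivity
        nlinarith [(Nat.cast_nonneg L : (0 : ℝ) ≤ L)]
      _ ≤ _ := by gcongr; linarith
  set K : Finset ℤ := Icc ⌊fwdDiff 1 f 0⌋ ⌊fwdDiff 1 f 0 + L * (α * η ^ 2)⌋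
  have hmaps : ∀ n ∈ range L, ⌊fwdDiff 1 f n⌋ ∈ K := fun n hn => by
    have hn : n < L := mem_range.1 hn
    have hlower := mul_le_sub_of_le_fwdDiff n.zero_le fun i hi =>
      (hf i ((mem_Ico.1 hi).2.trans hn)).1
    have hupper := mul_le_sub_of_le_fwdDiff (g := fun n => -fwdDiff 1 f n)
      (l := -(α * η ^ 2)) n.zero_le fun i hi => by
        have := (hf i ((mem_Ico.1 hi).2.trans hn)).2
        simp only [Function.iterate_succ, Function.iterate_zero, Function.comp_apply, id,
          fwdDiff] at this ⊢
        linarith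
    rw [Nat.cast_zero, sub_zero] at hlower hupper
    have : n * (α * η ^ 2) ≤ L * (α * η ^ 2) := by gcongr
    exact mem_Icc.2 ⟨Int.floor_mono (by nlinarith [(Nat.cast_nonneg n : (0 : ℝ) ≤ n)]),
      Int.floor_mono (by linarith)⟩
  rw [← sum_fiberwise_of_maps_to hmaps]
  calc _ ≤ ∑ k ∈ K, 5 / η := norm_sum_le_of_le _ fun k _ =>
        norm_sum_filter_floor_fwdDiff_eq_le hη hη₁.le (fun n hn => (hf n hn).1) k
    _ ≤ (L * (α * η ^ 2) + 2) * (5 / η) := by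
      rw [sum_const, nsmul_eq_mul]
      gcongr
      exact card_Icc_floor_le (by positivity)
    _ = 5 * α * (L * η) + 10 * (1 / η) := by field_simp; ring
    _ ≤ _ := by
      have h₁ : 0 ≤ L * η := by positivity
      have h₂ : 0 ≤ 1 / η := by positivity
      nlinarith [mul_nonneg hα h₂]

end SecondDifference

/-- The sequence `a 0, …, a (l - 1)`, extended by zero and moved `q` places to the right. -/
noncomputable def shiftedTruncation (a : ℕ → ℂ) (l q m : ℕ) : ℂ :=
  if q ≤ m ∧ m < q + l then a (m - q) else 0

lemma sum_shiftedTruncation (a : ℕ → ℂ) {l q N : ℕ} (hN : q + l ≤ N) :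
    ∑ m ∈ range N, shiftedTruncation a l q m = ∑ n ∈ range l, a n := by
  simp only [shiftedTruncation]
  rw [← sum_filter]
  symm
  refine sum_bij' (fun n _ => n + q) (fun m _ => m - q) ?_ ?_ ?_ ?_ ?_ <;>
    simp only [mem_filter, mem_range] <;> intros <;> first | lia | rw [Nat.add_sub_cancel]

lemma sum_shiftedTruncation_mul_conj (a : ℕ → ℂ) {l q r N : ℕ} (hN : q + l ≤ N) :
    ∑ m ∈ range N, shiftedTruncation a l q m *
        (starRingEnd ℂ) (shiftedTruncation a l (q + r) m) =
      ∑ n ∈ range (l - r), a (n + r) * (starRingEnd ℂ) (a n) := by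
  have hmul (m : ℕ) : shiftedTruncation a l q m *
      (starRingEnd ℂ) (shiftedTruncation a l (q + r) m) = if q + r ≤ m ∧ m < q + l then
        a (m - q) * (starRingEnd ℂ) (a (m - (q + r))) else 0 := by
    simp only [shiftedTruncation]
    split_ifs <;> first | rfl | lia | simp only [mul_zero, map_zero]
  simp only [hmul]
  rw [← sum_filter]
  symm
  refine sum_bij' (fun n _ => n + (q + r)) (fun m _ => m - (q + r)) ?_ ?_ ?_ ?_ ?_ <;>
    simp only [mem_filter, mem_range] <;> intro n hn
  any_goals lia
  rw [Nat.add_sub_cancel, add_left_comm, Nat.add_sub_cancel_left]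

lemma norm_sum_shiftedTruncation_mul_conj (a : ℕ → ℂ) {l q q' N : ℕ} (hq : q + l ≤ N)
    (hq' : q' + l ≤ N) :
    ‖∑ m ∈ range N, shiftedTruncation a l q m *
        (starRingEnd ℂ) (shiftedTruncation a l q' m)‖ =
      ‖∑ n ∈ range (l - Nat.dist q q'), a (n + Nat.dist q q') * (starRingEnd ℂ) (a n)‖ := by
  rcases le_total q q' with h | h
  · obtain ⟨r, rfl⟩ := Nat.exists_eq_add_of_le h
    rw [sum_shiftedTruncation_mul_conj a hq, Nat.dist_eq_sub_of_le h, Nat.add_sub_cancel_left]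
  · obtain ⟨r, rfl⟩ := Nat.exists_eq_add_of_le h
    rw [Nat.dist_eq_sub_of_le_right h, Nat.add_sub_cancel_left,
      ← sum_shiftedTruncation_mul_conj a hq', ← Complex.norm_conj, map_sum]
    simp only [map_mul, Complex.conj_conj, mul_comm]

lemma sum_natDist_le_two_mul_sum {T : ℕ → ℝ} (hT : ∀ r, 0 ≤ T r) {Q q : ℕ} (hq : q < Q) :
    ∑ q' ∈ range Q, T (Nat.dist q q') ≤ 2 * ∑ r ∈ range Q, T r := by
  have hmaps : ∀ q' ∈ range Q, Nat.dist q q' ∈ range Q := fun q' hq' => by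
    rw [mem_range, Nat.dist] at *
    lia
  rw [← sum_fiberwise_of_maps_to hmaps, mul_sum]
  refine sum_le_sum fun r _ => ?_
  have hfiber : {q' ∈ range Q | Nat.dist q q' = r} ⊆ {q - r, q + r} := fun q' hq' => by
    have hdist := (mem_filter.1 hq').2
    rw [Nat.dist] at hdist
    rw [mem_insert, mem_singleton]
    lia
  rw [sum_congr rfl fun q' hq' => congrArg T (mem_filter.1 hq').2, sum_const, nsmul_eq_mul]
  have hcard : #{q' ∈ range Q | Nat.dist q q' = r} ≤ 2 := (card_le_card hfiber).trans card_le_two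
  gcongr
  · exact hT r
  · exact_mod_cast hcard

lemma sum_norm_sq_sum_le {ι κ : Type*} (s : Finset ι) (t : Finset κ) (c : ι → κ → ℂ) :
    ∑ m ∈ t, ‖∑ q ∈ s, c q m‖ ^ 2 ≤
      ∑ q ∈ s, ∑ q' ∈ s, ‖∑ m ∈ t, c q m * (starRingEnd ℂ) (c q' m)‖ := by
  have hexpand : ((∑ m ∈ t, ‖∑ q ∈ s, c q m‖ ^ 2 : ℝ) : ℂ) =
      ∑ q ∈ s, ∑ q' ∈ s, ∑ m ∈ t, c q m * (starRingEnd ℂ) (c q' m) := by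
    push_cast
    simp_rw [← Complex.mul_conj', map_sum, sum_mul_sum]
    rw [sum_comm]
    exact sum_congr rfl fun q _ => sum_comm
  calc _ = ‖((∑ m ∈ t, ‖∑ q ∈ s, c q m‖ ^ 2 : ℝ) : ℂ)‖ := by
        rw [Complex.norm_real, Real.norm_eq_abs, abs_of_nonneg (by positivity)]
    _ ≤ _ := by
        rw [hexpand]
        exact (norm_sum_le _ _).trans (sum_le_sum fun q _ => norm_sum_le _ _)

/-- The **van der Corput inequality**: average the sum over `Q` shifts, then apply
Cauchy–Schwarz. -/
lemma mul_norm_sq_sum_range_le (a : ℕ → ℂ) (l Q : ℕ) :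
    (Q : ℝ) * ‖∑ n ∈ range l, a n‖ ^ 2 ≤ 2 * (l + Q) *
      ∑ r ∈ range Q, ‖∑ n ∈ range (l - r), a (n + r) * (starRingEnd ℂ) (a n)‖ := by
  rcases Q.eq_zero_or_pos with rfl | hQ
  · simp only [Nat.cast_zero, zero_mul, range_zero, sum_empty, mul_zero, le_refl]
  set T : ℕ → ℝ := fun r => ‖∑ n ∈ range (l - r), a (n + r) * (starRingEnd ℂ) (a n)‖
  set c := shiftedTruncation a l
  have hle {q : ℕ} (hq : q ∈ range Q) : q + l ≤ l + Q := by
    have := mem_range.1 hq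
    lia
  have hshift : (Q : ℂ) * ∑ n ∈ range l, a n = ∑ m ∈ range (l + Q), ∑ q ∈ range Q, c q m := by
    rw [sum_comm, sum_congr rfl fun q hq => sum_shiftedTruncation a (hle hq), sum_const,
      card_range, nsmul_eq_mul]
  have hcauchy : (Q * ‖∑ n ∈ range l, a n‖) ^ 2 ≤
      (l + Q) * ∑ m ∈ range (l + Q), ‖∑ q ∈ range Q, c q m‖ ^ 2 := by
    have hle : Q * ‖∑ n ∈ range l, a n‖ ≤ ∑ m ∈ range (l + Q), ‖∑ q ∈ range Q, c q m‖ := by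
      simpa only [← hshift, norm_mul, Complex.norm_natCast] using
        norm_sum_le (range (l + Q)) fun m => ∑ q ∈ range Q, c q m
    refine (pow_le_pow_left₀ (by positivity) hle 2).trans ?_
    simpa only [card_range, Nat.cast_add] using sq_sum_le_card_mul_sum_sq (s := range (l + Q))
      (f := fun m => ‖∑ q ∈ range Q, c q m‖)
  have hcorr : ∑ m ∈ range (l + Q), ‖∑ q ∈ range Q, c q m‖ ^ 2 ≤
      Q * (2 * ∑ r ∈ range Q, T r) := by
    calc _ ≤ ∑ q ∈ range Q, ∑ q' ∈ range Q, T (Nat.dist q q') := by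
          refine (sum_norm_sq_sum_le _ _ c).trans_eq ?_
          exact sum_congr rfl fun q hq => sum_congr rfl fun q' hq' =>
            norm_sum_shiftedTruncation_mul_conj a (hle hq) (hle hq')
      _ ≤ ∑ q ∈ range Q, 2 * ∑ r ∈ range Q, T r := sum_le_sum fun q hq =>
          sum_natDist_le_two_mul_sum (T := T) (fun _ => norm_nonneg _) (mem_range.1 hq)
      _ = _ := by rw [sum_const, card_range, nsmul_eq_mul]
  refine le_of_mul_le_mul_left ?_ (Nat.cast_pos.2 hQ : (0 : ℝ) < Q)
  calc (Q : ℝ) * (Q * ‖∑ n ∈ range l, a n‖ ^ 2) = (Q * ‖∑ n ∈ range l, a n‖) ^ 2 := by ring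
    _ ≤ (l + Q) * (Q * (2 * ∑ r ∈ range Q, T r)) := hcauchy.trans (by gcongr)
    _ = _ := by ring

lemma pow_norm_sum_e_le_mean (f : ℕ → ℝ) {l Q p : ℕ} {L : ℝ} (hl : l ≤ L) (hQ : 0 < Q)
    (hQL : Q ≤ 2 * L) :
    ‖∑ n ∈ range l, e (f n)‖ ^ (2 * p) ≤
      (6 * L) ^ p * ((∑ r ∈ range Q, ‖∑ n ∈ range (l - r), e (f (n + r) - f n)‖ ^ p) / Q) := by
  have hQ' : (0 : ℝ) < Q := by exact_mod_cast hQ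
  set T : ℕ → ℝ := fun r => ‖∑ n ∈ range (l - r), e (f (n + r) - f n)‖
  have hvdc := mul_norm_sq_sum_range_le (fun n => e (f n)) l Q
  simp only [conj_e, ← e_add, ← sub_eq_add_neg] at hvdc
  have hsq : ‖∑ n ∈ range l, e (f n)‖ ^ 2 ≤ 6 * L * ∑ r ∈ range Q, 1 / (Q : ℝ) * T r := by
    rw [← mul_sum, one_div, ← div_eq_inv_mul, mul_div_assoc', le_div_iff₀' hQ']
    refine hvdc.trans (mul_le_mul_of_nonneg_right ?_ (sum_nonneg fun _ _ => norm_nonneg _))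
    linarith
  have hmean : (∑ r ∈ range Q, 1 / (Q : ℝ) * T r) ^ p ≤ ∑ r ∈ range Q, 1 / (Q : ℝ) * T r ^ p :=
    Real.pow_arith_mean_le_arith_mean_pow _ _ _ (fun _ _ => by positivity)
      (by rw [sum_const, card_range, nsmul_eq_mul, mul_one_div_cancel hQ'.ne'])
      (fun _ _ => norm_nonneg _) p
  have hL : 0 ≤ 6 * L := by linarith
  calc _ = (‖∑ n ∈ range l, e (f n)‖ ^ 2) ^ p := pow_mul _ _ _
    _ ≤ (6 * L * ∑ r ∈ range Q, 1 / (Q : ℝ) * T r) ^ p := by gcongr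
    _ ≤ (6 * L) ^ p * ∑ r ∈ range Q, 1 / (Q : ℝ) * T r ^ p := by
      rw [mul_pow]
      gcongr
    _ = _ := by rw [← mul_sum, one_div, ← div_eq_inv_mul]

lemma fwdDiff_iter_shift_sub (f : ℕ → ℝ) (k r n : ℕ) :
    (fwdDiff 1)^[k] (fun n => f (n + r) - f n) n =
      ∑ i ∈ range r, (fwdDiff 1)^[k + 1] f (n + i) := by
  have hsub (n : ℕ) : (fwdDiff 1)^[k] (fun n => f (n + r) - f n) n =
      (fwdDiff 1)^[k] f (n + r) - (fwdDiff 1)^[k] f n := by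
    simp only [fwdDiff_iter_eq_sum_shift, ← sum_sub_distrib, smul_sub, smul_eq_mul]
    exact sum_congr rfl fun i _ => by rw [add_right_comm]
  rw [hsub, sum_congr rfl fun i _ => congrFun (Function.iterate_succ_apply' (fwdDiff 1) k f) _]
  exact (sum_range_sub (fun i => (fwdDiff 1)^[k] f (n + i)) r).symm

lemma fwdDiff_iter_shift_sub_mem_Icc {f : ℕ → ℝ} {k l r n : ℕ} {a b : ℝ}
    (hf : ∀ n < l, (fwdDiff 1)^[k + 1] f n ∈ Set.Icc a b) (hn : n < l - r) :
    (fwdDiff 1)^[k] (fun n => f (n + r) - f n) n ∈ Set.Icc (r * a) (r * b) := by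
  have hmem : ∀ i ∈ range r, (fwdDiff 1)^[k + 1] f (n + i) ∈ Set.Icc a b := fun i hi =>
    hf (n + i) (by have := mem_range.1 hi; lia)
  rw [fwdDiff_iter_shift_sub]
  constructor
  · simpa only [card_range, nsmul_eq_mul] using card_nsmul_le_sum _ _ _ fun i hi => (hmem i hi).1
  · simpa only [card_range, nsmul_eq_mul] using sum_le_card_nsmul _ _ _ fun i hi => (hmem i hi).2

lemma sum_Ico_one_div_sqrt_le (N : ℕ) : ∑ r ∈ Ico 1 N, 1 / √(r : ℝ) ≤ 2 * √N := by
  have hstep (r : ℕ) : 1 / √(r + 1 : ℝ) ≤ 2 * √(r + 1 : ℝ) - 2 * √(r : ℝ) := by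
    have hpos : 0 < √(r + 1 : ℝ) := by positivity
    rw [div_le_iff₀ hpos]
    nlinarith [sq_nonneg (√(r + 1 : ℝ) - √(r : ℝ)), Real.sq_sqrt (by positivity : (0 : ℝ) ≤ r + 1),
      Real.sq_sqrt (by positivity : (0 : ℝ) ≤ r)]
  rcases N with - | N
  · simp only [zero_le, Ico_eq_empty_of_le, sum_empty, Nat.cast_zero, Real.sqrt_zero, mul_zero,
      le_refl]
  · rw [sum_Ico_eq_sum_range, Nat.add_sub_cancel]
    calc ∑ r ∈ range N, 1 / √((1 + r : ℕ) : ℝ)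
        ≤ ∑ r ∈ range N, (2 * √((r + 1 : ℕ) : ℝ) - 2 * √(r : ℝ)) := sum_le_sum fun r _ => by
          simpa only [add_comm 1 r, Nat.cast_add, Nat.cast_one] using hstep r
      _ ≤ 2 * √((N + 1 : ℕ) : ℝ) := by
          rw [sum_range_sub fun r : ℕ => 2 * √(r : ℝ)]
          have : √(N : ℝ) ≤ √((N + 1 : ℕ) : ℝ) := Real.sqrt_le_sqrt (by simp)
          simp only [Nat.cast_zero, Real.sqrt_zero, mul_zero, sub_zero]
          linarith

lemma exists_pow_eq_mul_pow {η r : ℝ} (hη : 0 < η) (hr : 0 < r) (hrη : r * η ≤ 1) (j : ℕ) :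
    ∃ ζ, 0 < ζ ∧ ζ ^ (j + 2) = r * η ^ (j + 3) ∧ ζ ≤ η ∧ η * √(r * η) ≤ ζ := by
  have hsplit : r * η ^ (j + 3) = η ^ (j + 2) * (r * η) := by ring
  have hpow : ((r * η ^ (j + 3)) ^ (((j + 2 : ℕ) : ℝ)⁻¹)) ^ (j + 2) = r * η ^ (j + 3) :=
    Real.rpow_inv_natCast_pow (by positivity) (by lia)
  refine ⟨_, by positivity, hpow, ?_, ?_⟩
  · refine (pow_le_pow_iff_left₀ (by positivity) hη.le (by lia : j + 2 ≠ 0)).1 ?_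
    rw [hpow, hsplit]
    exact mul_le_of_le_one_right (by positivity) hrη
  · refine (pow_le_pow_iff_left₀ (by positivity) (by positivity) (by lia : j + 2 ≠ 0)).1 ?_
    rw [hpow, hsplit, mul_pow]
    gcongr
    calc √(r * η) ^ (j + 2) ≤ √(r * η) ^ 2 :=
          pow_le_pow_of_le_one (by positivity) (Real.sqrt_le_one.2 hrη) (by lia)
      _ = r * η := Real.sq_sqrt (by positivity)

section IteratedDifferences

variable {f : ℕ → ℝ} {l j : ℕ} {L η α C : ℝ}

lemma pow_norm_sum_e_le_pow (f : ℕ → ℝ) (hl : l ≤ L) (p : ℕ) :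
    ‖∑ n ∈ range l, e (f n)‖ ^ p ≤ L ^ p := by
  refine pow_le_pow_left₀ (norm_nonneg _) ((norm_sum_e_le_card _ _).trans ?_) _
  rwa [card_range]

lemma add_mul_add_div_sqrt_le {P Q : ℝ} (hQ : 0 < Q) (hη : 0 < η) (hL : 0 < L) (hC : 0 ≤ C)
    (hP : 0 ≤ P) (hQη : 1 ≤ Q * η) :
    P + C * P * (Q * η + 1 / (η * √η * L) * (2 * √Q)) ≤
      (1 + 2 * C) * P * (η + 1 / (η * L)) * Q := by
  have hsqrt : 1 / √(Q * η) ≤ 1 := by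
    rw [div_le_one (by positivity)]
    exact Real.one_le_sqrt.2 hQη
  have hηL : 0 ≤ 1 / (η * L) := by positivity
  calc _ = P + C * P * Q * (η + 2 * (1 / √(Q * η)) * (1 / (η * L))) := by
        have h : √Q * √Q = Q := Real.mul_self_sqrt hQ.le
        rw [Real.sqrt_mul hQ.le]
        field_simp
        linear_combination (2 * C * P) * h
    _ ≤ P * (Q * η) + C * P * Q * (2 * (η + 1 / (η * L))) := by
        gcongr
        · exact le_mul_of_one_le_right hP hQη
        · nlinarith
    _ ≤ P * (Q * (η + 1 / (η * L))) + C * P * Q * (2 * (η + 1 / (η * L))) := by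
        gcongr
        exact le_add_of_nonneg_right hηL
    _ = _ := by ring

lemma sum_pow_norm_sum_e_shift_sub_le {p Q : ℕ} (hl : l ≤ L) (hL : 0 < L) (hη : 0 < η) (hC : 0 ≤ C)
    (hQ : Q = ⌈1 / η⌉₊)
    (hterm : ∀ r : ℕ, 0 < r → r * η ≤ 1 →
      ‖∑ n ∈ range (l - r), e (f (n + r) - f n)‖ ^ p ≤
        C * L ^ p * (η + 1 / (η * √(r * η) * L))) :
    (∑ r ∈ range Q, ‖∑ n ∈ range (l - r), e (f (n + r) - f n)‖ ^ p) / Q ≤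
      (1 + 2 * C) * L ^ p * (η + 1 / (η * L)) := by
  have hQη : 1 ≤ Q * η := by
    rw [hQ, ← div_le_iff₀ hη]
    exact Nat.le_ceil _
  have hQ' : (0 : ℝ) < Q := pos_of_mul_pos_left (one_pos.trans_le hQη) hη.le
  have hzero : ‖∑ n ∈ range (l - 0), e (f (n + 0) - f n)‖ ^ p ≤ L ^ p :=
    pow_norm_sum_e_le_pow _ hl p
  have hpos : ∀ r ∈ Ico 1 Q, ‖∑ n ∈ range (l - r), e (f (n + r) - f n)‖ ^ p ≤
      C * L ^ p * (η + 1 / (η * √η * L) * (1 / √(r : ℝ))) := fun r hr => by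
    rw [mem_Ico, hQ, Nat.lt_ceil, lt_div_iff₀ hη] at hr
    refine (hterm r hr.1 hr.2.le).trans_eq ?_
    rw [Real.sqrt_mul (Nat.cast_nonneg r), one_div_mul_one_div]
    ring_nf
  rw [div_le_iff₀ hQ', range_eq_Ico, sum_eq_sum_Ico_succ_bot (by exact_mod_cast hQ'), zero_add]
  calc _ ≤ L ^ p + ∑ r ∈ Ico 1 Q, C * L ^ p * (η + 1 / (η * √η * L) * (1 / √(r : ℝ))) :=
        add_le_add hzero (sum_le_sum hpos)
    _ ≤ L ^ p + C * L ^ p * (Q * η + 1 / (η * √η * L) * (2 * √(Q : ℝ))) := by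
        rw [← mul_sum, sum_add_distrib, ← mul_sum, sum_const, Nat.card_Ico, nsmul_eq_mul]
        gcongr
        · exact Nat.sub_le _ _
        · exact sum_Ico_one_div_sqrt_le Q
    _ ≤ _ := add_mul_add_div_sqrt_le hQ' hη hL hC (by positivity) hQη

lemma ceil_one_div_le_two_mul {η L : ℝ} (hη : 0 < η) (hL : 0 < L) (h : η + 1 / (η * L) ≤ 1) :
    (⌈1 / η⌉₊ : ℝ) ≤ 2 * L := by
  have hηL : 0 < 1 / (η * L) := by positivity
  have hη₁ : 1 ≤ 1 / η := (one_le_div hη).2 (by linarith)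
  have hL₁ : 1 / η ≤ L := by
    have h : 1 / (η * L) ≤ 1 := by linarith
    rw [div_le_one (by positivity)] at h
    exact (div_le_iff₀' hη).2 h
  linarith [Nat.ceil_lt_add_one (by positivity : 0 ≤ 1 / η)]

/-- The `k`-th difference test, `k = j + 2`: van der Corput's inequality with shifts up to `1 / η`
lowers the order of the differences by one. -/
lemma exists_pow_norm_sum_e_le (hα : 0 ≤ α) (j : ℕ) : ∃ C : ℝ, 0 ≤ C ∧
    ∀ (f : ℕ → ℝ) (l : ℕ) (L η : ℝ), (l : ℝ) ≤ L → 0 < L → 0 < η →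
    (∀ n < l, (fwdDiff 1)^[j + 2] f n ∈ Set.Icc (η ^ (j + 2)) (α * η ^ (j + 2))) →
    ‖∑ n ∈ range l, e (f n)‖ ^ 2 ^ j ≤ C * L ^ 2 ^ j * (η + 1 / (η * L)) := by
  induction j with
  | zero =>
    refine ⟨5 * (α + 2), by positivity, fun f l L η hl hL hη hf => ?_⟩
    rw [pow_zero, pow_one, pow_one]
    calc _ ≤ 5 * (α + 2) * (l * η + 1 / η) := norm_sum_e_le_of_fwdDiff_two_mem_Icc hα hη hf
      _ ≤ 5 * (α + 2) * (L * η + 1 / η) := by gcongr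
      _ = _ := by field_simp
  | succ j ih =>
    obtain ⟨C, hC, ih⟩ := ih
    refine ⟨1 + 6 ^ 2 ^ j * (1 + 2 * C), by positivity, fun f l L η hl hL hη hf => ?_⟩
    rcases le_or_gt 1 (η + 1 / (η * L)) with htriv | htriv
    · have hone : (1 : ℝ) ≤ 1 + 6 ^ 2 ^ j * (1 + 2 * C) := le_add_of_nonneg_right (by positivity)
      calc _ ≤ L ^ 2 ^ (j + 1) := pow_norm_sum_e_le_pow f hl _
        _ ≤ _ := by
            rw [mul_right_comm]
            exact le_mul_of_one_le_left (by positivity) (one_le_mul_of_one_le_of_one_le hone htriv)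
    have hQL := ceil_one_div_le_two_mul hη hL htriv.le
    have hterm (r : ℕ) (hr : 0 < r) (hrη : r * η ≤ 1) :
        ‖∑ n ∈ range (l - r), e (f (n + r) - f n)‖ ^ 2 ^ j ≤
          C * L ^ 2 ^ j * (η + 1 / (η * √(r * η) * L)) := by
      have hr' : (0 : ℝ) < r := Nat.cast_pos.2 hr
      obtain ⟨ζ, hζ, hζpow, hζη, hζ_ge⟩ := exists_pow_eq_mul_pow hη hr' hrη j
      refine (ih (fun n => f (n + r) - f n) (l - r) L ζ ?_ hL hζ fun n hn => ?_).trans (by gcongr)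
      · exact le_trans (by exact_mod_cast l.sub_le r) hl
      · rw [hζpow, mul_left_comm]
        exact fwdDiff_iter_shift_sub_mem_Icc hf hn
    calc _ ≤ (6 * L) ^ 2 ^ j * ((1 + 2 * C) * L ^ 2 ^ j * (η + 1 / (η * L))) := by
          rw [pow_succ' 2 j]
          refine (pow_norm_sum_e_le_mean f hl (Nat.ceil_pos.2 (by positivity)) hQL).trans ?_
          gcongr
          exact sum_pow_norm_sum_e_shift_sub_le hl hL hη hC rfl hterm
      _ = 6 ^ 2 ^ j * (1 + 2 * C) * L ^ 2 ^ (j + 1) * (η + 1 / (η * L)) := by ring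
      _ ≤ _ := by
          gcongr
          exact le_add_of_nonneg_left zero_le_one

end IteratedDifferences

/-! ### Exponential sums with a square root phase -/

lemma exists_fwdDiff_iter_eq (k : ℕ) : ∀ {F : ℕ → ℝ → ℝ} {x : ℝ},
    (∀ i, ∀ t ∈ Set.Icc x (x + k), HasDerivAt (F i) (F (i + 1) t) t) →
    ∃ ξ ∈ Set.Icc x (x + k), (fwdDiff 1)^[k] (F 0) x = F k ξ := by
  induction k with
  | zero => exact fun _ => ⟨_, ⟨le_rfl, by simp⟩, rfl⟩
  | succ k ih =>
    intro F x hF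
    push_cast at hF ⊢
    obtain ⟨ξ, ⟨hξ, hξ'⟩, hdiff⟩ := ih (F := fun i t => F i (t + 1) - F i t) fun i t ht =>
      ((hF i (t + 1) ⟨by linarith [ht.1], by linarith [ht.2]⟩).comp_add_const t 1).sub
        (hF i t ⟨ht.1, by linarith [ht.2]⟩)
    have hderiv (t : ℝ) (ht : t ∈ Set.Icc ξ (ξ + 1)) : HasDerivAt (F k) (F (k + 1) t) t :=
      hF k t ⟨hξ.trans ht.1, by linarith [ht.2]⟩
    obtain ⟨c, hc, hslope⟩ := exists_hasDerivAt_eq_slope (F k) (F (k + 1)) (lt_add_one ξ)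
      (fun t ht => (hderiv t ht).continuousAt.continuousWithinAt)
      (fun t ht => hderiv t (Set.Ioo_subset_Icc_self ht))
    refine ⟨c, ⟨by linarith [hc.1], by linarith [hc.2]⟩, ?_⟩
    rw [hslope, add_sub_cancel_left, div_one, ← hdiff, Function.iterate_succ_apply]
    rfl

lemma fwdDiff_iter_comp_natCast (g : ℝ → ℝ) (x : ℝ) (k n : ℕ) :
    (fwdDiff 1)^[k] (fun n : ℕ => g (x + n)) n = (fwdDiff 1)^[k] g (x + n) := by
  simp only [fwdDiff_iter_eq_sum_shift, smul_eq_mul, mul_one, nsmul_eq_mul, Nat.cast_add,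
    add_assoc]

/-- The `i`-th derivative of `t ↦ 2 √(A t)`. -/
noncomputable def sqrtDeriv (A : ℝ) (i : ℕ) (t : ℝ) : ℝ :=
  2 * √A * (∏ m ∈ range i, (1 / 2 - (m : ℝ))) * t ^ (1 / 2 - (i : ℝ))

lemma hasDerivAt_sqrtDeriv (A : ℝ) (i : ℕ) {t : ℝ} (ht : 0 < t) :
    HasDerivAt (sqrtDeriv A i) (sqrtDeriv A (i + 1) t) t := by
  refine ((Real.hasDerivAt_rpow_const (p := 1 / 2 - (i : ℝ)) (Or.inl ht.ne')).const_mul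
    (2 * √A * ∏ m ∈ range i, (1 / 2 - (m : ℝ)))).congr_deriv ?_
  rw [sqrtDeriv, prod_range_succ, Nat.cast_succ, ← sub_sub]
  ring

lemma sqrtDeriv_zero {A : ℝ} (hA : 0 ≤ A) (t : ℝ) : sqrtDeriv A 0 t = 2 * √(A * t) := by
  rw [sqrtDeriv, prod_range_zero, Nat.cast_zero, sub_zero, mul_one, mul_assoc, ← Real.sqrt_eq_rpow,
    Real.sqrt_mul hA]

lemma sqrtDeriv_five (A t : ℝ) : sqrtDeriv A 5 t = 105 / 16 * √A * t ^ (-(9 / 2) : ℝ) := by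
  have hprod : ∏ m ∈ range 5, (1 / 2 - (m : ℝ)) = 105 / 32 := by norm_num [prod_range_succ]
  have hexp : 1 / 2 - ((5 : ℕ) : ℝ) = -(9 / 2) := by norm_num
  rw [sqrtDeriv, hprod, hexp]
  ring

lemma antitoneOn_sqrtDeriv_five (A : ℝ) : AntitoneOn (sqrtDeriv A 5) (Set.Ioi 0) := by
  intro s hs t _ hst
  rw [sqrtDeriv_five, sqrtDeriv_five]
  exact mul_le_mul_of_nonneg_left (Real.rpow_le_rpow_of_nonpos hs hst (by norm_num)) (by positivity)

lemma sqrtDeriv_five_div {c t : ℝ} (hc : 0 ≤ c) (ht : 0 ≤ t) (A : ℝ) :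
    sqrtDeriv A 5 (t / c) = c ^ (9 / 2 : ℝ) * sqrtDeriv A 5 t := by
  rw [sqrtDeriv_five, sqrtDeriv_five, Real.div_rpow ht hc, Real.rpow_neg hc, div_inv_eq_mul]
  ring

lemma fwdDiff_five_sqrt_mem_Icc {A m ν : ℝ} {n : ℕ} (hA : 0 ≤ A) (hm : 1 ≤ m) (hν : m / 16 ≤ ν)
    (hn : ν + n ≤ m) :
    (fwdDiff 1)^[5] (fun n : ℕ => 2 * √(A * (ν + n))) n ∈
      Set.Icc (sqrtDeriv A 5 (6 * m)) (96 ^ (9 / 2 : ℝ) * sqrtDeriv A 5 (6 * m)) := by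
  have hn₀ : (0 : ℝ) ≤ n := n.cast_nonneg
  obtain ⟨ξ, ⟨hξ, hξ'⟩, heq⟩ := exists_fwdDiff_iter_eq 5 (F := sqrtDeriv A) (x := ν + n)
    fun i t ht => hasDerivAt_sqrtDeriv A i (by linarith [ht.1])
  push_cast at hξ'
  simp only [← sqrtDeriv_zero hA]
  rw [fwdDiff_iter_comp_natCast, heq, ← sqrtDeriv_five_div (by norm_num) (by positivity)]
  exact ⟨antitoneOn_sqrtDeriv_five A (Set.mem_Ioi.2 (by linarith)) (Set.mem_Ioi.2 (by linarith))
      (by linarith),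
    antitoneOn_sqrtDeriv_five A (Set.mem_Ioi.2 (by linarith)) (Set.mem_Ioi.2 (by linarith))
      (by linarith)⟩

lemma exists_pow_norm_sum_e_sqrt_le : ∃ C : ℝ, 0 ≤ C ∧ ∀ (A m : ℝ) (ν l : ℕ), 0 < A → 1 ≤ m →
    m / 16 ≤ ν → ν + l ≤ m + 1 → ∀ η, η = A ^ (1 / 10 : ℝ) * m ^ (-(9 / 10) : ℝ) →
    ‖∑ n ∈ range l, e (2 * √(A * (ν + n)))‖ ^ 8 ≤ C * m ^ 8 * (η + 1 / (η * m)) := by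
  obtain ⟨C, hC, htest⟩ := exists_pow_norm_sum_e_le (α := 96 ^ (9 / 2 : ℝ)) (by positivity) 3
  set κ : ℝ := (105 / 16 * 6 ^ (-(9 / 2) : ℝ)) ^ (1 / 5 : ℝ) with hκ_def
  have hκ : 0 < κ := by positivity
  refine ⟨C * 2 ^ 8 * (κ + 1 / κ), by positivity, fun A m ν l hA hm hν hl η hη_def => ?_⟩
  have hm₀ : 0 < m := one_pos.trans_le hm
  have hη : 0 < η := hη_def ▸ by positivity
  have hηpow : (κ * η) ^ 5 = sqrtDeriv A 5 (6 * m) := by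
    rw [sqrtDeriv_five, Real.mul_rpow (by norm_num) hm₀.le, Real.sqrt_eq_rpow, hη_def, hκ_def]
    simp only [mul_pow, ← Real.rpow_mul_natCast hA.le, ← Real.rpow_mul_natCast hm₀.le,
      ← Real.rpow_mul_natCast (by positivity : 0 ≤ 105 / 16 * (6 : ℝ) ^ (-(9 / 2) : ℝ))]
    norm_num
    ring
  calc _ ≤ C * (2 * m) ^ 2 ^ 3 * (κ * η + 1 / (κ * η * (2 * m))) := by
        refine htest _ l (2 * m) (κ * η) (by linarith [ν.cast_nonneg (α := ℝ)]) (by positivity)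
          (by positivity) fun n hn => ?_
        rw [hηpow]
        have hn' : (n : ℝ) + 1 ≤ l := by exact_mod_cast hn
        exact fwdDiff_five_sqrt_mem_Icc hA.le hm hν (by linarith)
    _ ≤ C * (2 * m) ^ 2 ^ 3 * (κ * η + 1 / (κ * η * m)) := by gcongr; linarith
    _ ≤ C * (2 * m) ^ 2 ^ 3 * ((κ + 1 / κ) * (η + 1 / (η * m))) := by
        gcongr
        rw [mul_assoc κ, ← one_div_mul_one_div]
        have h₁ : 0 ≤ κ * (1 / (η * m)) := by positivity
        have h₂ : 0 ≤ 1 / κ * η := by positivity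
        linarith
    _ = _ := by ring

lemma exists_norm_sum_e_sqrt_le : ∃ C : ℝ, 0 ≤ C ∧ ∀ (A m : ℝ) (ν l : ℕ), 0 < A → 1 ≤ m →
    m / 16 ≤ ν → ν + l ≤ m + 1 →
    ‖∑ n ∈ range l, e (2 * √(A * (ν + n)))‖ ≤
      C * (A ^ (1 / 80 : ℝ) * m ^ (71 / 80 : ℝ) + A ^ (-(1 / 80) : ℝ) * m ^ (79 / 80 : ℝ)) := by
  obtain ⟨C, hC, hpow⟩ := exists_pow_norm_sum_e_sqrt_le
  refine ⟨C ^ (1 / 8 : ℝ), by positivity, fun A m ν l hA hm hν hl => ?_⟩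
  have hm₀ : 0 < m := one_pos.trans_le hm
  set η : ℝ := A ^ (1 / 10 : ℝ) * m ^ (-(9 / 10) : ℝ) with hη_def
  have hη : 0 < η := by positivity
  have hterm : m * η ^ (1 / 8 : ℝ) = A ^ (1 / 80 : ℝ) * m ^ (71 / 80 : ℝ) := by
    rw [hη_def, Real.mul_rpow (by positivity) (by positivity), ← Real.rpow_mul hA.le,
      ← Real.rpow_mul hm₀.le, mul_left_comm, ← Real.rpow_one_add' hm₀.le (by norm_num)]
    norm_num
  have hterm' : m * (1 / (η * m)) ^ (1 / 8 : ℝ) = A ^ (-(1 / 80) : ℝ) * m ^ (79 / 80 : ℝ) := by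
    rw [hη_def, mul_assoc, ← Real.rpow_add_one' hm₀.le (by norm_num), one_div,
      Real.inv_rpow (by positivity), Real.mul_rpow (by positivity) (by positivity),
      ← Real.rpow_mul hA.le, ← Real.rpow_mul hm₀.le, mul_inv, ← Real.rpow_neg hA.le,
      ← Real.rpow_neg hm₀.le, mul_left_comm, ← Real.rpow_one_add' hm₀.le (by norm_num)]
    norm_num
  calc _ = (‖∑ n ∈ range l, e (2 * √(A * (ν + n)))‖ ^ 8) ^ (1 / 8 : ℝ) := by
        rw [← Real.rpow_natCast_mul (norm_nonneg _)]
        norm_num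
    _ ≤ (C * m ^ 8 * (η + 1 / (η * m))) ^ (1 / 8 : ℝ) := by
        gcongr
        exact hpow A m ν l hA hm hν hl η hη_def
    _ = C ^ (1 / 8 : ℝ) * (m * (η + 1 / (η * m)) ^ (1 / 8 : ℝ)) := by
        rw [mul_assoc, Real.mul_rpow hC (by positivity),
          Real.mul_rpow (by positivity) (by positivity), ← Real.rpow_natCast_mul hm₀.le]
        norm_num
    _ ≤ C ^ (1 / 8 : ℝ) * (m * (η ^ (1 / 8 : ℝ) + (1 / (η * m)) ^ (1 / 8 : ℝ))) := by
        gcongr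
        exact Real.rpow_add_le_add_rpow hη.le (by positivity) (by norm_num) (by norm_num)
    _ = _ := by rw [mul_add m, hterm, hterm']

/-! ### Oscillatory integrals -/

lemma continuous_e : Continuous e := by
  simp only [funext e_eq_exp]
  fun_prop

lemma hasDerivAt_e_comp {φ : ℝ → ℝ} {φ' u : ℝ} (h : HasDerivAt φ φ' u) :
    HasDerivAt (fun u => e (φ u)) (2 * Real.pi * Complex.I * φ' * e (φ u)) u := by
  simp only [e_eq_exp]
  refine (((h.const_mul (2 * Real.pi)).ofReal_comp).mul_const Complex.I).cexp.congr_deriv ?_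
  push_cast
  ring

section FirstDerivative

variable {a b : ℝ} {H H' φ φ' φ'' : ℝ → ℝ}

lemma integral_mul_deriv_e (hab : a ≤ b) (hH : ∀ u ∈ Set.Icc a b, HasDerivAt H (H' u) u)
    (hφ : ∀ u ∈ Set.Icc a b, HasDerivAt φ (φ' u) u) (hH' : ContinuousOn H' (Set.Icc a b))
    (hφ' : ContinuousOn φ' (Set.Icc a b)) :
    2 * Real.pi * Complex.I * ∫ u in a..b, (H u * φ' u : ℝ) * e (φ u) =
      H b * e (φ b) - H a * e (φ a) - ∫ u in a..b, H' u * e (φ u) := by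
  rw [← Set.uIcc_of_le hab] at hH hφ hH' hφ'
  have he : ContinuousOn (fun u => e (φ u)) (Set.uIcc a b) := fun u hu =>
    (hasDerivAt_e_comp (hφ u hu)).continuousAt.continuousWithinAt
  rw [← intervalIntegral.integral_mul_deriv_eq_deriv_mul (u := fun u => (H u : ℂ))
    (fun u hu => (hH u hu).ofReal_comp) (fun u hu => hasDerivAt_e_comp (hφ u hu))
    (Complex.continuous_ofReal.comp_continuousOn hH').intervalIntegrable
    ((continuousOn_const.mul (Complex.continuous_ofReal.comp_continuousOn hφ')).mul
      he).intervalIntegrable, ← intervalIntegral.integral_const_mul]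
  refine intervalIntegral.integral_congr fun u _ => ?_
  push_cast
  ring

lemma norm_integral_mul_deriv_e_le {M : ℝ} (hab : a ≤ b)
    (hH : ∀ u ∈ Set.Icc a b, HasDerivAt H (H' u) u)
    (hφ : ∀ u ∈ Set.Icc a b, HasDerivAt φ (φ' u) u) (hH' : ContinuousOn H' (Set.Icc a b))
    (hφ' : ContinuousOn φ' (Set.Icc a b)) (hM : ∀ u ∈ Set.Icc a b, |H u| ≤ M)
    (hmono : ∀ u ∈ Set.Icc a b, 0 ≤ H' u) :
    ‖∫ u in a..b, (H u * φ' u : ℝ) * e (φ u)‖ ≤ M := by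
  have hMa := hM a (Set.left_mem_Icc.2 hab)
  have hMb := hM b (Set.right_mem_Icc.2 hab)
  have hnorm (x t : ℝ) : ‖(x : ℂ) * e t‖ = |x| := by
    rw [norm_mul, norm_e, mul_one, Complex.norm_real, Real.norm_eq_abs]
  have hvar : ‖∫ u in a..b, H' u * e (φ u)‖ ≤ 2 * M := by
    rw [← Set.uIcc_of_le hab] at hH hH' hmono
    calc _ ≤ ∫ u in a..b, ‖H' u * e (φ u)‖ :=
          intervalIntegral.norm_integral_le_integral_norm hab
      _ = ∫ u in a..b, H' u := intervalIntegral.integral_congr fun u hu => by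
          simp only [hnorm, abs_of_nonneg (hmono u hu)]
      _ = H b - H a :=
          intervalIntegral.integral_eq_sub_of_hasDerivAt hH hH'.intervalIntegrable
      _ ≤ 2 * M := by linarith [abs_le.1 hMa, abs_le.1 hMb]
  have hparts := congrArg norm (integral_mul_deriv_e hab hH hφ hH' hφ')
  have hpi : ‖(2 * Real.pi * Complex.I : ℂ)‖ = 2 * Real.pi := by simp [abs_of_pos Real.pi_pos]
  have hbdry : ‖(H b : ℂ) * e (φ b) - H a * e (φ a) - ∫ u in a..b, H' u * e (φ u)‖ ≤
      |H b| + |H a| + 2 * M := by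
    refine (norm_sub_le _ _).trans (add_le_add ((norm_sub_le _ _).trans_eq ?_) hvar)
    rw [hnorm, hnorm]
  rw [norm_mul, hpi] at hparts
  nlinarith [Real.pi_gt_three, norm_nonneg (∫ u in a..b, (H u * φ' u : ℝ) * e (φ u))]

lemma norm_integral_e_le {lam : ℝ} (hab : a ≤ b)
    (hφ : ∀ u ∈ Set.Icc a b, HasDerivAt φ (φ' u) u)
    (hφ' : ∀ u ∈ Set.Icc a b, HasDerivAt φ' (φ'' u) u) (hφ'' : ContinuousOn φ'' (Set.Icc a b))
    (hconvex : ∀ u ∈ Set.Icc a b, 0 ≤ φ'' u) (hlam : 0 < lam)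
    (hlower : ∀ u ∈ Set.Icc a b, lam ≤ |φ' u|) : ‖∫ u in a..b, e (φ u)‖ ≤ 1 / lam := by
  have hne (u : ℝ) (hu : u ∈ Set.Icc a b) : φ' u ≠ 0 :=
    abs_pos.1 (hlam.trans_le (hlower u hu))
  have hφ'c : ContinuousOn φ' (Set.Icc a b) := fun u hu =>
    (hφ' u hu).continuousAt.continuousWithinAt
  have hneg : ∫ u in a..b, e (φ u) = -∫ u in a..b, ((-(φ' u)⁻¹ * φ' u : ℝ) : ℂ) * e (φ u) := by
    rw [← intervalIntegral.integral_neg]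
    refine intervalIntegral.integral_congr fun u hu => ?_
    rw [Set.uIcc_of_le hab] at hu
    simp only [neg_mul, inv_mul_cancel₀ (hne u hu), Complex.ofReal_neg, Complex.ofReal_one,
      one_mul, neg_neg]
  rw [hneg, norm_neg]
  refine norm_integral_mul_deriv_e_le hab (H := fun u => -(φ' u)⁻¹)
    (fun u hu => ((hφ' u hu).inv (hne u hu)).neg) hφ ?_ hφ'c (fun u hu => ?_) fun u hu => ?_
  · exact (hφ''.neg.div (hφ'c.pow 2) fun u hu => pow_ne_zero 2 (hne u hu)).neg
  · rw [abs_neg, abs_inv, one_div]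
    exact inv_anti₀ hlam (hlower u hu)
  · rw [neg_div, neg_neg]
    exact div_nonneg (hconvex u hu) (sq_nonneg _)

end FirstDerivative

/-- The Fresnel integral `∫₀ᵀ e(t²) dt`. -/
noncomputable def fresnel (T : ℝ) : ℂ := ∫ t in (0 : ℝ)..T, e (t ^ 2)

lemma continuous_e_sq : Continuous fun t : ℝ => e (t ^ 2) := continuous_e.comp (continuous_pow 2)

lemma hasDerivAt_fresnel (T : ℝ) : HasDerivAt fresnel (e (T ^ 2)) T :=
  continuous_e_sq.integral_hasStrictDerivAt 0 T |>.hasDerivAt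

lemma fresnel_sub (S T : ℝ) : fresnel T - fresnel S = ∫ t in S..T, e (t ^ 2) :=
  intervalIntegral.integral_interval_sub_left (continuous_e_sq.intervalIntegrable _ _)
    (continuous_e_sq.intervalIntegrable _ _)

lemma fresnel_neg (T : ℝ) : fresnel (-T) = -fresnel T := by
  have h := intervalIntegral.integral_comp_neg (f := fun t : ℝ => e (t ^ 2)) (a := 0) (b := T)
  simp only [neg_sq, neg_zero] at h
  rw [fresnel, fresnel, h, ← intervalIntegral.integral_symm]

lemma norm_fresnel_le {T : ℝ} (hT : 0 ≤ T) : ‖fresnel T‖ ≤ T := by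
  simpa only [fresnel, sub_zero, abs_of_nonneg hT, one_mul] using
    intervalIntegral.norm_integral_le_of_norm_le_const (a := 0) (b := T) (C := 1)
      (f := fun t : ℝ => e (t ^ 2)) fun t _ => (norm_e _).le

lemma norm_fresnel_sub_le {S T : ℝ} (hS : 0 < S) (hST : S ≤ T) :
    ‖fresnel T - fresnel S‖ ≤ 1 / S := by
  rw [fresnel_sub]
  refine norm_integral_e_le (φ := fun t => t ^ 2) (φ' := fun t => 2 * t) (φ'' := fun _ => 2) hST
    (fun u _ => by simpa using hasDerivAt_pow 2 u)
    (fun u _ => by simpa using (hasDerivAt_id u).const_mul 2) continuousOn_const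
    (fun _ _ => zero_le_two) hS fun u hu => ?_
  exact le_abs.2 (Or.inl (by linarith [hu.1]))

/-- The value `∫₀^∞ e(t²) dt` of the improper Fresnel integral. -/
noncomputable def fresnelLim : ℂ := limUnder atTop fresnel

lemma tendsto_fresnel : Tendsto fresnel atTop (nhds fresnelLim) := by
  refine CauchySeq.tendsto_limUnder (Metric.cauchySeq_iff'.2 fun ε hε => ⟨2 / ε, fun T hT => ?_⟩)
  rw [dist_eq_norm]
  refine (norm_fresnel_sub_le (by positivity) hT).trans_lt ?_
  rw [one_div_div]
  exact half_lt_self hε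

lemma norm_fresnel_sub_fresnelLim_le {T : ℝ} (hT : 0 < T) :
    ‖fresnel T - fresnelLim‖ ≤ 1 / T := by
  refine le_of_tendsto (tendsto_const_nhds.sub tendsto_fresnel).norm ?_
  filter_upwards [eventually_ge_atTop T] with S hS
  rw [norm_sub_rev]
  exact norm_fresnel_sub_le hT hS

lemma norm_fresnelLim_le : ‖fresnelLim‖ ≤ 2 := by
  have h := norm_sub_le (fresnel 1) (fresnel 1 - fresnelLim)
  rw [sub_sub_cancel] at h
  linarith [norm_fresnel_le zero_le_one, norm_fresnel_sub_fresnelLim_le one_pos]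

/-- The limit of `fresnel` at `+∞` or `-∞`, whichever is on the same side of `0` as `T`. -/
noncomputable def fresnelStep (T : ℝ) : ℂ := if 0 ≤ T then fresnelLim else -fresnelLim

lemma norm_fresnel_sub_fresnelStep (T : ℝ) :
    ‖fresnel T - fresnelStep T‖ = ‖fresnel |T| - fresnelLim‖ := by
  rcases le_or_gt 0 T with h | h
  · rw [fresnelStep, if_pos h, abs_of_nonneg h]
  · rw [fresnelStep, if_neg h.not_ge, abs_of_neg h, fresnel_neg, ← norm_neg]
    congr 1
    ring

lemma norm_fresnel_sub_fresnelStep_le (T : ℝ) : ‖fresnel T - fresnelStep T‖ ≤ 3 := by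
  rw [norm_fresnel_sub_fresnelStep]
  rcases le_total |T| 1 with h | h
  · linarith [norm_sub_le (fresnel |T|) fresnelLim, norm_fresnel_le (abs_nonneg T),
      norm_fresnelLim_le]
  · have hT := one_pos.trans_le h
    refine (norm_fresnel_sub_fresnelLim_le hT).trans ?_
    rw [div_le_iff₀ hT]
    linarith

lemma abs_mul_norm_fresnel_sub_fresnelStep_le (T : ℝ) :
    |T| * ‖fresnel T - fresnelStep T‖ ≤ 1 := by
  rw [norm_fresnel_sub_fresnelStep]
  rcases (abs_nonneg T).eq_or_lt with h | h
  · rw [← h, zero_mul]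
    exact zero_le_one
  · rw [mul_comm, ← le_div_iff₀ h]
    exact norm_fresnel_sub_fresnelLim_le h

/-! ### Stationary phase -/

section StationaryPhase

/-- With `A = r² c⁴` and `ν = r²`, the phase `A / u + ν u` has its stationary point at `c²`, and
`phaseRoot r c u` is the signed square root of its excess over the value there. -/
noncomputable def phaseRoot (r c u : ℝ) : ℝ := r * (√u - c ^ 2 / √u)

/-- The factor `q` for which the phase `φ u = r² c⁴ / u + r² u` satisfies
`1 - (c / r) * (phaseRoot r c)' = q φ'`. -/
noncomputable def phaseQuotient (r c u : ℝ) : ℝ :=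
  (√u / (√u + c) + u / (u + c ^ 2)) / (2 * r ^ 2)

variable {r c u a b : ℝ}

lemma hasDerivAt_div_add_mul (A ν : ℝ) (hu : u ≠ 0) :
    HasDerivAt (fun u => A / u + ν * u) (ν - A / u ^ 2) u :=
  (((hasDerivAt_inv hu).const_mul A).add ((hasDerivAt_id u).const_mul ν)).congr_deriv (by ring)

lemma phase_eq_add_phaseRoot_sq (r c : ℝ) (hu : 0 < u) :
    r ^ 2 * c ^ 4 / u + r ^ 2 * u = 2 * (r ^ 2 * c ^ 2) + phaseRoot r c u ^ 2 := by
  obtain ⟨s, hs, rfl⟩ : ∃ s, 0 < s ∧ u = s ^ 2 :=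
    ⟨√u, Real.sqrt_pos.2 hu, (Real.sq_sqrt hu.le).symm⟩
  rw [phaseRoot, Real.sqrt_sq hs.le]
  field_simp
  ring

lemma hasDerivAt_phaseRoot (r c : ℝ) (hu : 0 < u) :
    HasDerivAt (phaseRoot r c) (r * (1 + c ^ 2 / u) / (2 * √u)) u := by
  have hs : √u ≠ 0 := (Real.sqrt_pos.2 hu).ne'
  have hd := Real.hasDerivAt_sqrt hu.ne'
  refine ((hd.sub ((hd.inv hs).const_mul (c ^ 2))).const_mul r).congr_deriv ?_
  rw [Real.sq_sqrt hu.le]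
  ring

lemma hasDerivAt_phaseQuotient (r : ℝ) (hc : 0 < c) (hu : 0 < u) :
    HasDerivAt (phaseQuotient r c)
      ((c / (2 * √u) / (√u + c) ^ 2 + c ^ 2 / (u + c ^ 2) ^ 2) / (2 * r ^ 2)) u := by
  have hd := Real.hasDerivAt_sqrt hu.ne'
  refine ((hd.div (hd.add_const c) (by positivity)).add
    ((hasDerivAt_id' u).div ((hasDerivAt_id' u).add_const (c ^ 2)) (by positivity))).div_const
      (2 * r ^ 2) |>.congr_deriv ?_
  ring

lemma one_sub_mul_deriv_phaseRoot (hr : r ≠ 0) (hc : 0 < c) (hu : 0 < u) :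
    1 - c / r * (r * (1 + c ^ 2 / u) / (2 * √u)) =
      phaseQuotient r c u * (r ^ 2 - r ^ 2 * c ^ 4 / u ^ 2) := by
  obtain ⟨s, hs, rfl⟩ : ∃ s, 0 < s ∧ u = s ^ 2 :=
    ⟨√u, Real.sqrt_pos.2 hu, (Real.sq_sqrt hu.le).symm⟩
  rw [phaseQuotient, Real.sqrt_sq hs.le]
  field_simp
  ring

lemma abs_phaseQuotient_le (r : ℝ) (hc : 0 < c) (hu : 0 < u) :
    |phaseQuotient r c u| ≤ 1 / r ^ 2 := by
  have h₁ : √u / (√u + c) ≤ 1 := by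
    rw [div_le_one (by positivity)]
    linarith
  have h₂ : u / (u + c ^ 2) ≤ 1 := by
    rw [div_le_one (by positivity)]
    linarith [sq_nonneg c]
  rw [phaseQuotient, abs_of_nonneg (by positivity)]
  calc _ ≤ (1 + 1) / (2 * r ^ 2) := by gcongr
    _ = 1 / r ^ 2 := by rw [one_add_one_eq_two, ← div_div, div_self two_ne_zero]

lemma continuousOn_deriv_phaseRoot_mul_e_sq (r c : ℝ) (ha : 0 < a) :
    ContinuousOn (fun u => ((r * (1 + c ^ 2 / u) / (2 * √u) : ℝ) : ℂ) * e (phaseRoot r c u ^ 2))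
      (Set.Icc a b) := by
  have hpos (u : ℝ) (hu : u ∈ Set.Icc a b) : 0 < u := ha.trans_le hu.1
  have hroot : ContinuousOn (phaseRoot r c) (Set.Icc a b) := fun u hu =>
    (hasDerivAt_phaseRoot r c (hpos u hu)).continuousAt.continuousWithinAt
  refine (Complex.continuous_ofReal.comp_continuousOn ?_).mul
    (continuous_e_sq.comp_continuousOn hroot)
  refine (continuousOn_const.mul (continuousOn_const.add
    (continuousOn_const.div continuousOn_id fun u hu => (hpos u hu).ne'))).div (by fun_prop) ?_
  exact fun u hu => mul_ne_zero two_ne_zero (Real.sqrt_pos.2 (hpos u hu)).ne'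

lemma integral_deriv_phaseRoot_mul_e_sq (r c : ℝ) (ha : 0 < a) (hab : a ≤ b) :
    ∫ u in a..b, ((r * (1 + c ^ 2 / u) / (2 * √u) : ℝ) : ℂ) * e (phaseRoot r c u ^ 2) =
      fresnel (phaseRoot r c b) - fresnel (phaseRoot r c a) := by
  refine intervalIntegral.integral_eq_sub_of_hasDerivAt
    (f := fun u => fresnel (phaseRoot r c u)) (fun u hu => ?_)
    ((Set.uIcc_of_le hab ▸ continuousOn_deriv_phaseRoot_mul_e_sq r c ha).intervalIntegrable)
  rw [Set.uIcc_of_le hab] at hu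
  refine ((hasDerivAt_fresnel _).scomp u (hasDerivAt_phaseRoot r c (ha.trans_le hu.1))).congr_deriv
    Complex.real_smul

lemma integral_e_sub_fresnel_eq (hr : r ≠ 0) (hc : 0 < c) (ha : 0 < a) (hab : a ≤ b) :
    (∫ u in a..b, e (r ^ 2 * c ^ 4 / u + r ^ 2 * u)) - (c / r : ℝ) * e (2 * (r ^ 2 * c ^ 2)) *
        (fresnel (phaseRoot r c b) - fresnel (phaseRoot r c a)) =
      ∫ u in a..b, (phaseQuotient r c u * (r ^ 2 - r ^ 2 * c ^ 4 / u ^ 2) : ℝ) *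
        e (r ^ 2 * c ^ 4 / u + r ^ 2 * u) := by
  have hphase : ContinuousOn (fun u => e (r ^ 2 * c ^ 4 / u + r ^ 2 * u)) (Set.uIcc a b) := by
    rw [Set.uIcc_of_le hab]
    exact fun u hu => (hasDerivAt_e_comp (hasDerivAt_div_add_mul _ _
      (ha.trans_le hu.1).ne')).continuousAt.continuousWithinAt
  rw [← integral_deriv_phaseRoot_mul_e_sq r c ha hab, ← intervalIntegral.integral_const_mul,
    ← intervalIntegral.integral_sub hphase.intervalIntegrable
      ((Set.uIcc_of_le hab ▸ continuousOn_deriv_phaseRoot_mul_e_sq r c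
        ha).intervalIntegrable.const_mul _)]
  refine intervalIntegral.integral_congr fun u hu => ?_
  rw [Set.uIcc_of_le hab] at hu
  have hu₀ := ha.trans_le hu.1
  simp only [← one_sub_mul_deriv_phaseRoot hr hc hu₀, phase_eq_add_phaseRoot_sq r c hu₀, e_add]
  push_cast
  ring

lemma norm_integral_e_sub_fresnel_le (hr : r ≠ 0) (hc : 0 < c) (ha : 0 < a) (hab : a ≤ b) :
    ‖(∫ u in a..b, e (r ^ 2 * c ^ 4 / u + r ^ 2 * u)) -
      (c / r : ℝ) * e (2 * (r ^ 2 * c ^ 2)) *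
        (fresnel (phaseRoot r c b) - fresnel (phaseRoot r c a))‖ ≤ 1 / r ^ 2 := by
  have hpos (u : ℝ) (hu : u ∈ Set.Icc a b) : 0 < u := ha.trans_le hu.1
  rw [integral_e_sub_fresnel_eq hr hc ha hab]
  refine norm_integral_mul_deriv_e_le hab
    (fun u hu => hasDerivAt_phaseQuotient r hc (hpos u hu))
    (fun u hu => hasDerivAt_div_add_mul _ _ (hpos u hu).ne') ?_ ?_
    (fun u hu => abs_phaseQuotient_le r hc (hpos u hu)) fun u hu => ?_
  · refine ((ContinuousOn.div ?_ (by fun_prop) fun u _ => ?_).add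
      (continuousOn_const.div (by fun_prop) fun u hu => ?_)).div_const _
    · exact continuousOn_const.div (by fun_prop) fun u hu =>
        mul_ne_zero two_ne_zero (Real.sqrt_pos.2 (hpos u hu)).ne'
    · positivity
    · have := hpos u hu
      positivity
  · exact continuousOn_const.sub (continuousOn_const.div (by fun_prop) fun u hu =>
      pow_ne_zero 2 (hpos u hu).ne')
  · have := hpos u hu
    positivity

lemma norm_integral_e_div_sub_mul_le {A μ : ℝ} (hA : 0 < A) (ha : 0 < a) (hab : a ≤ b)
    (hμ : 0 ≤ μ) : ‖∫ u in a..b, e (A / u + -μ * u)‖ ≤ 1 / (A / b ^ 2 + μ) := by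
  have hpos (u : ℝ) (hu : u ∈ Set.Icc a b) : 0 < u := ha.trans_le hu.1
  have hb : 0 < b := ha.trans_le hab
  refine norm_integral_e_le (φ' := fun u => -μ - A / u ^ 2) (φ'' := fun u => 2 * A / u ^ 3) hab
    (fun u hu => hasDerivAt_div_add_mul A (-μ) (hpos u hu).ne') (fun u hu => ?_) ?_ (fun u hu => ?_)
    (by positivity) fun u hu => ?_
  · have hu' := (hpos u hu).ne'
    refine (((hasDerivAt_pow 2 u).inv (by positivity)).const_mul A).const_sub (-μ)
      |>.congr_deriv ?_
    push_cast
    field_simp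
  · exact continuousOn_const.div (by fun_prop) fun u hu => pow_ne_zero 3 (hpos u hu).ne'
  · have := hpos u hu
    positivity
  · have := hpos u hu
    rw [← neg_add', abs_neg, add_comm]
    refine le_abs.2 (Or.inl ?_)
    gcongr
    exact hu.2

end StationaryPhase

/-! ### The dual sum -/

section FresnelError

variable {r c u : ℝ}

/-- The error in replacing, in the stationary phase formula for the phase `A / u + ν u`, the
Fresnel integral at the endpoint `u` by its limit at infinity. As in `phaseRoot`, `A = r² c⁴` and
`ν = r²`. -/
noncomputable def fresnelError (r c u : ℝ) : ℝ :=
  c / r * ‖fresnel (phaseRoot r c u) - fresnelStep (phaseRoot r c u)‖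

lemma abs_phaseRoot_mul (hr : 0 < r) (hu : 0 < u) :
    |phaseRoot r c u| * (√u * (u + c ^ 2)) = r * |u ^ 2 - c ^ 4| := by
  obtain ⟨s, hs, rfl⟩ : ∃ s, 0 < s ∧ u = s ^ 2 :=
    ⟨√u, Real.sqrt_pos.2 hu, (Real.sq_sqrt hu.le).symm⟩
  rw [phaseRoot, Real.sqrt_sq hs.le, ← abs_of_pos (show 0 < s * (s ^ 2 + c ^ 2) by positivity),
    ← abs_mul, ← abs_of_pos hr, ← abs_mul, abs_of_pos hr]
  congr 1
  field_simp
  ring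

lemma mul_sqrt_mul_add_sq_le (hc : 0 ≤ c) (hu : 0 ≤ u) :
    c * (√u * (u + c ^ 2)) ≤ 2 * (|u ^ 2 - c ^ 4| + u ^ 2) := by
  obtain ⟨s, hs, rfl⟩ : ∃ s, 0 ≤ s ∧ u = s ^ 2 := ⟨√u, Real.sqrt_nonneg u, (Real.sq_sqrt hu).symm⟩
  rw [Real.sqrt_sq hs]
  rcases le_total c s with h | h
  · calc c * (s * (s ^ 2 + c ^ 2)) ≤ s * (s * (s ^ 2 + s ^ 2)) := by gcongr
      _ ≤ _ := by linarith [abs_nonneg ((s ^ 2) ^ 2 - c ^ 4)]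
  · calc c * (s * (s ^ 2 + c ^ 2)) ≤ c * (c * (c ^ 2 + c ^ 2)) := by gcongr
      _ ≤ _ := by linarith [neg_abs_le ((s ^ 2) ^ 2 - c ^ 4)]

lemma fresnelError_le (hr : 0 < r) (hc : 0 < c) (hu : 0 < u) (hne : r ^ 2 * c ^ 4 / u ^ 2 ≠ r ^ 2) :
    fresnelError r c u ≤ 2 / r ^ 2 + 2 / |r ^ 2 - r ^ 2 * c ^ 4 / u ^ 2| := by
  have hdiff : r ^ 2 - r ^ 2 * c ^ 4 / u ^ 2 = r ^ 2 / u ^ 2 * (u ^ 2 - c ^ 4) := by field_simp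
  have hpos : 0 < |u ^ 2 - c ^ 4| :=
    abs_pos.2 fun h => hne (by rw [h, mul_zero] at hdiff; linarith)
  have hrhs : 2 / r ^ 2 + 2 / |r ^ 2 - r ^ 2 * c ^ 4 / u ^ 2| =
      2 * (|u ^ 2 - c ^ 4| + u ^ 2) / (r ^ 2 * |u ^ 2 - c ^ 4|) := by
    rw [hdiff, abs_mul, abs_of_pos (show 0 < r ^ 2 / u ^ 2 by positivity)]
    field_simp
  have hfresnel := abs_mul_norm_fresnel_sub_fresnelStep_le (phaseRoot r c u)
  set X := ‖fresnel (phaseRoot r c u) - fresnelStep (phaseRoot r c u)‖ with hX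
  rw [hrhs, le_div_iff₀ (by positivity)]
  calc fresnelError r c u * (r ^ 2 * |u ^ 2 - c ^ 4|) = c * (r * |u ^ 2 - c ^ 4|) * X := by
        rw [fresnelError, ← hX]
        field_simp
    _ = c * (√u * (u + c ^ 2)) * (|phaseRoot r c u| * X) := by
        rw [← abs_phaseRoot_mul hr hu]
        ring
    _ ≤ c * (√u * (u + c ^ 2)) := mul_le_of_le_one_right (by positivity) hfresnel
    _ ≤ _ := mul_sqrt_mul_add_sq_le hc.le hu.le

lemma fresnelError_le_mul_sqrt (hr : 1 ≤ r) (hc : 0 ≤ c) (hu : 0 < u)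
    (h : r ^ 2 * c ^ 4 / u ^ 2 ≤ 2 * r ^ 2) : fresnelError r c u ≤ 6 * √u := by
  have hcu : c ≤ 2 * √u := by
    rw [div_le_iff₀ (by positivity), mul_assoc, mul_left_comm,
      mul_le_mul_iff_right₀ (by positivity)] at h
    refine le_of_pow_le_pow_left₀ four_ne_zero (by positivity) (h.trans ?_)
    rw [mul_pow, show √u ^ 4 = (√u ^ 2) ^ 2 by ring, Real.sq_sqrt hu.le]
    linarith [sq_nonneg u]
  calc fresnelError r c u ≤ c / r * 3 :=
        mul_le_mul_of_nonneg_left (norm_fresnel_sub_fresnelStep_le _) (by positivity)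
    _ ≤ c * 3 := by
        gcongr
        exact div_le_self hc hr
    _ ≤ 6 * √u := by linarith

lemma fresnelStep_phaseRoot (hr : 0 < r) (hu : 0 < u) :
    fresnelStep (phaseRoot r c u) =
      if r ^ 2 * c ^ 4 / u ^ 2 ≤ r ^ 2 then fresnelLim else -fresnelLim := by
  rw [fresnelStep]
  congr 1
  rw [phaseRoot, mul_nonneg_iff_of_pos_left hr, sub_nonneg, div_le_iff₀ (Real.sqrt_pos.2 hu),
    Real.mul_self_sqrt hu.le, div_le_iff₀ (by positivity), mul_le_mul_iff_right₀ (by positivity),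
    show c ^ 4 = (c ^ 2) ^ 2 by ring, sq_le_sq₀ (sq_nonneg c) hu.le]

end FresnelError

section ReciprocalSums

lemma sum_le_sum_one_div_of_injOn {V : ℕ} {s : Finset ℕ} {f : ℕ → ℝ} {g : ℕ → ℕ}
    (hg : Set.InjOn g s) (hs : ∀ ν ∈ s, g ν ∈ Icc 1 V) (hf : ∀ ν ∈ s, f ν ≤ 1 / g ν) :
    ∑ ν ∈ s, f ν ≤ ∑ ν ∈ Icc 1 V, 1 / (ν : ℝ) := by
  refine (sum_le_sum hf).trans ?_
  rw [← sum_image (f := fun n : ℕ => 1 / (n : ℝ)) hg]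
  exact sum_le_sum_of_subset_of_nonneg (image_subset_iff.2 hs) fun n _ _ => by positivity

variable {V : ℕ} {m : ℝ}

lemma card_filter_abs_sub_le_one (V : ℕ) (m : ℝ) :
    #((Icc 1 V).filter fun ν : ℕ => |ν - m| ≤ 1) ≤ 3 := by
  have hsub : ((Icc 1 V).filter fun ν : ℕ => |ν - m| ≤ 1) ⊆ Icc (⌊m⌋₊ - 1) (⌊m⌋₊ + 1) := by
    intro ν hν
    have h := abs_le.1 (mem_filter.1 hν).2
    have hlow : ⌊m⌋₊ ≤ ν + 1 := Nat.floor_le_of_le (by push_cast; linarith)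
    have hupp : ν < ⌊m⌋₊ + 2 := by
      exact_mod_cast show (ν : ℝ) < ⌊m⌋₊ + 2 by linarith [Nat.lt_floor_add_one m]
    rw [Finset.mem_Icc]
    lia
  refine (card_le_card hsub).trans ?_
  rw [Nat.card_Icc]
  lia

lemma sum_one_div_sub_le_of_add_one_lt (hmV : m ≤ V) :
    ∑ ν ∈ (Icc 1 V).filter fun ν : ℕ => ν + 1 < m, 1 / (m - ν) ≤ ∑ ν ∈ Icc 1 V, 1 / (ν : ℝ) := by
  have hfloor (ν : ℕ) (hν : (ν : ℝ) + 1 < m) : ν + 1 ≤ ⌊m⌋₊ :=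
    Nat.le_floor (by exact_mod_cast hν.le)
  have hV : ⌊m⌋₊ ≤ V := Nat.floor_le_of_le hmV
  refine sum_le_sum_one_div_of_injOn (g := fun ν => ⌊m⌋₊ - ν) (fun ν hν μ hμ h => ?_)
    (fun ν hν => ?_) fun ν hν => ?_
  · have hν' := hfloor ν (mem_filter.1 hν).2
    have hμ' := hfloor μ (mem_filter.1 hμ).2
    dsimp only at h
    lia
  · have hν' := hfloor ν (mem_filter.1 hν).2
    rw [Finset.mem_Icc]
    lia
  · have hν' := hfloor ν (mem_filter.1 hν).2
    have hfloor_le := Nat.floor_le (show 0 ≤ m by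
      linarith [(mem_filter.1 hν).2, ν.cast_nonneg (α := ℝ)])
    have hcast : (ν : ℝ) + 1 ≤ ⌊m⌋₊ := by exact_mod_cast hν'
    rw [Nat.cast_sub (by lia)]
    exact one_div_le_one_div_of_le (by linarith) (by linarith)

lemma sum_one_div_sub_le_of_lt_sub_one (hm : 0 ≤ m) (V : ℕ) :
    ∑ ν ∈ (Icc 1 V).filter fun ν : ℕ => m + 1 < ν, 1 / (ν - m) ≤ ∑ ν ∈ Icc 1 V, 1 / (ν : ℝ) := by
  have hceil (ν : ℕ) (hν : m + 1 < ν) : ⌈m⌉₊ + 1 ≤ ν := by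
    exact_mod_cast show ((⌈m⌉₊ : ℝ)) < ν by linarith [Nat.ceil_lt_add_one hm]
  refine sum_le_sum_one_div_of_injOn (g := fun ν => ν - ⌈m⌉₊) (fun ν hν μ hμ h => ?_)
    (fun ν hν => ?_) fun ν hν => ?_
  · have hν' := hceil ν (mem_filter.1 hν).2
    have hμ' := hceil μ (mem_filter.1 hμ).2
    dsimp only at h
    lia
  · have hν' := hceil ν (mem_filter.1 hν).2
    have hνV := Finset.mem_Icc.1 (mem_filter.1 hν).1
    rw [Finset.mem_Icc]
    lia
  · have hν' := hceil ν (mem_filter.1 hν).2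
    have hcast : (⌈m⌉₊ : ℝ) + 1 ≤ ν := by exact_mod_cast hν'
    rw [Nat.cast_sub (by lia)]
    exact one_div_le_one_div_of_le (by linarith) (by linarith [Nat.le_ceil m])

lemma sum_one_div_abs_sub_le (hm : 0 ≤ m) (hmV : m ≤ V) :
    ∑ ν ∈ (Icc 1 V).filter fun ν : ℕ => ¬|ν - m| ≤ 1, 1 / |ν - m| ≤
      2 * ∑ ν ∈ Icc 1 V, 1 / (ν : ℝ) := by
  have hsplit (ν : ℕ) (hν : ν ∈ Icc 1 V) : (if ¬|ν - m| ≤ 1 then 1 / |ν - m| else 0) =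
      (if ν + 1 < m then 1 / (m - ν) else 0) + if m + 1 < ν then 1 / (ν - m) else 0 := by
    by_cases hbelow : ν + 1 < m
    · rw [abs_of_neg (by linarith), if_pos (by linarith), if_pos hbelow, if_neg (by linarith),
        neg_sub, add_zero]
    by_cases habove : m + 1 < ν
    · rw [abs_of_pos (by linarith), if_pos (by linarith), if_neg hbelow, if_pos habove, zero_add]
    · rw [if_neg (not_not.2 (abs_le.2 ⟨by linarith, by linarith⟩)), if_neg hbelow, if_neg habove,
        add_zero]
  rw [sum_filter, sum_congr rfl hsplit, sum_add_distrib, ← sum_filter, ← sum_filter, two_mul]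
  exact add_le_add (sum_one_div_sub_le_of_add_one_lt hmV) (sum_one_div_sub_le_of_lt_sub_one hm V)

end ReciprocalSums

section StationaryPhaseSum

variable {A ν a b u : ℝ}

lemma mul_sqrt_sqrt_div_pow_four (hA : 0 ≤ A) (hν : 0 < ν) : √ν ^ 2 * √√(A / ν) ^ 4 = A := by
  rw [show √√(A / ν) ^ 4 = (√√(A / ν) ^ 2) ^ 2 by ring, Real.sq_sqrt (Real.sqrt_nonneg _),
    Real.sq_sqrt hν.le, Real.sq_sqrt (by positivity), mul_div_cancel₀ _ hν.ne']

lemma sum_fresnelError_le (hA : 0 < A) (hu : 0 < u) {V : ℕ} (hV : A / u ^ 2 ≤ V) :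
    ∑ ν ∈ Icc 1 V, fresnelError √ν √√(A / ν) u ≤ 18 * √u + 6 * ∑ ν ∈ Icc 1 V, 1 / (ν : ℝ) := by
  set m := A / u ^ 2 with hm
  have hm₀ : 0 ≤ m := by positivity
  have hterm (ν : ℕ) (hν : ν ∈ Icc 1 V) : fresnelError √ν √√(A / ν) u ≤
      (if |ν - m| ≤ 1 then 6 * √u else 0) +
        (2 * (1 / ν) + 2 * if ¬|ν - m| ≤ 1 then 1 / |ν - m| else 0) := by
    have hν₁ : (1 : ℝ) ≤ ν := by exact_mod_cast (Finset.mem_Icc.1 hν).1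
    have hν₀ : (0 : ℝ) < ν := one_pos.trans_le hν₁
    have hA' := mul_sqrt_sqrt_div_pow_four hA.le hν₀
    have hsq := Real.sq_sqrt hν₀.le
    split_ifs with hnear
    · have h := fresnelError_le_mul_sqrt (c := √√(A / ν)) (Real.one_le_sqrt.2 hν₁)
        (Real.sqrt_nonneg _) hu (by
          rw [hA', hsq, ← hm]
          linarith [abs_le.1 hnear])
      have hinv : 0 ≤ 1 / (ν : ℝ) := by positivity
      linarith
    · have h := fresnelError_le (c := √√(A / ν)) (Real.sqrt_pos.2 hν₀) (by positivity) hu (by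
        rw [hA', hsq, ← hm]
        intro hmν
        rw [hmν, sub_self, abs_zero] at hnear
        exact hnear zero_le_one)
      rw [hA', hsq, ← hm] at h
      linarith [div_eq_mul_one_div 2 (ν : ℝ), div_eq_mul_one_div 2 |ν - m|]
  have hnear : ∑ ν ∈ (Icc 1 V).filter fun ν : ℕ => |ν - m| ≤ 1, 6 * √u ≤ 18 * √u := by
    rw [sum_const, nsmul_eq_mul]
    have hcard : (#((Icc 1 V).filter fun ν : ℕ => |ν - m| ≤ 1) : ℝ) ≤ 3 := by
      exact_mod_cast card_filter_abs_sub_le_one V m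
    nlinarith [Real.sqrt_nonneg u]
  refine (sum_le_sum hterm).trans ?_
  rw [sum_add_distrib, sum_add_distrib, ← mul_sum, ← mul_sum, ← sum_filter, ← sum_filter]
  linarith [sum_one_div_abs_sub_le hm₀ hV]

/-- The modulus of the main term in the stationary phase formula for the phase `A / u + ν u`. -/
noncomputable def stationaryWeight (A ν : ℝ) : ℝ := √√(A / ν) / √ν

lemma norm_integral_e_sub_fresnelStep_le (hA : 0 < A) (hν : 0 < ν) (ha : 0 < a) (hab : a ≤ b) :
    ‖(∫ u in a..b, e (A / u + ν * u)) - stationaryWeight A ν * e (2 * √(A * ν)) *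
      (fresnelStep (phaseRoot √ν √√(A / ν) b) - fresnelStep (phaseRoot √ν √√(A / ν) a))‖ ≤
      1 / ν + (fresnelError √ν √√(A / ν) b + fresnelError √ν √√(A / ν) a) := by
  have hA' := mul_sqrt_sqrt_div_pow_four hA.le hν
  have hsq : √ν ^ 2 * √√(A / ν) ^ 2 = √(A * ν) := by
    rw [← Real.sqrt_sq (show 0 ≤ √ν ^ 2 * √√(A / ν) ^ 2 by positivity),
      show (√ν ^ 2 * √√(A / ν) ^ 2) ^ 2 = √ν ^ 2 * √√(A / ν) ^ 4 * √ν ^ 2 by ring, hA',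
      Real.sq_sqrt hν.le]
  have h := norm_integral_e_sub_fresnel_le (Real.sqrt_pos.2 hν).ne'
    (show 0 < √√(A / ν) by positivity) ha hab
  rw [hA', hsq, Real.sq_sqrt hν.le] at h
  have hnorm (z : ℂ) :
      ‖(stationaryWeight A ν : ℂ) * e (2 * √(A * ν)) * z‖ = √√(A / ν) / √ν * ‖z‖ := by
    rw [norm_mul, norm_mul, norm_e, mul_one, Complex.norm_real, stationaryWeight,
      Real.norm_of_nonneg (by positivity)]
  set z := (stationaryWeight A ν : ℂ) * e (2 * √(A * ν))
  set F := phaseRoot √ν √√(A / ν)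
  calc _ = ‖((∫ u in a..b, e (A / u + ν * u)) - z * (fresnel (F b) - fresnel (F a))) +
          (z * (fresnel (F b) - fresnelStep (F b)) - z * (fresnel (F a) - fresnelStep (F a)))‖ := by
        congr 1
        ring
    _ ≤ _ := (norm_add_le _ _).trans (add_le_add h ((norm_sub_le _ _).trans_eq (by
        rw [hnorm, hnorm, fresnelError, fresnelError])))

lemma sum_mul_fresnelStep_sub (hA : 0 < A) (ha : 0 < a) (hab : a ≤ b) {V : ℕ} (hV : A / a ^ 2 ≤ V)
    (z : ℕ → ℂ) :
    ∑ ν ∈ Icc 1 V, z ν *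
        (fresnelStep (phaseRoot √ν √√(A / ν) b) - fresnelStep (phaseRoot √ν √√(A / ν) a)) =
      2 * fresnelLim * ∑ ν ∈ Ico ⌈A / b ^ 2⌉₊ ⌈A / a ^ 2⌉₊, z ν := by
  have hb : 0 < b := ha.trans_le hab
  have hmono : A / b ^ 2 ≤ A / a ^ 2 := by gcongr
  have hsub : Ico ⌈A / b ^ 2⌉₊ ⌈A / a ^ 2⌉₊ ⊆ Icc 1 V := fun ν hν => by
    have hlow : 0 < ⌈A / b ^ 2⌉₊ := Nat.ceil_pos.2 (by positivity)
    have hupp : ⌈A / a ^ 2⌉₊ ≤ V := Nat.ceil_le.2 hV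
    rw [Finset.mem_Ico] at hν
    rw [Finset.mem_Icc]
    lia
  have hstep (ν : ℕ) (hν : ν ∈ Icc 1 V) (u : ℝ) (hu : 0 < u) :
      fresnelStep (phaseRoot √ν √√(A / ν) u) =
        if A / u ^ 2 ≤ ν then fresnelLim else -fresnelLim := by
    have hν₀ : (0 : ℝ) < ν := by exact_mod_cast (Finset.mem_Icc.1 hν).1
    rw [fresnelStep_phaseRoot (Real.sqrt_pos.2 hν₀) hu, mul_sqrt_sqrt_div_pow_four hA.le hν₀,
      Real.sq_sqrt hν₀.le]
  rw [mul_sum, ← sum_subset hsub fun ν hν hν' => ?_]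
  · refine sum_congr rfl fun ν hν => ?_
    rw [hstep ν (hsub hν) b hb, hstep ν (hsub hν) a ha]
    rw [Finset.mem_Ico, Nat.ceil_le, Nat.lt_ceil] at hν
    rw [if_pos hν.1, if_neg hν.2.not_ge]
    ring
  · rw [hstep ν hν b hb, hstep ν hν a ha]
    rw [Finset.mem_Ico, Nat.ceil_le, Nat.lt_ceil, not_and, not_lt] at hν'
    by_cases hνb : A / b ^ 2 ≤ ν
    · rw [if_pos hνb, if_pos (hν' hνb), sub_self, mul_zero]
    · rw [if_neg hνb, if_neg fun h => hνb (hmono.trans h), sub_self, mul_zero]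

lemma norm_sum_integral_e_le (hA : 0 < A) (ha : 0 < a) (hab : a ≤ b) {V : ℕ} (hV : A / a ^ 2 ≤ V) :
    ‖∑ ν ∈ Icc 1 V, ∫ u in a..b, e (A / u + ν * u)‖ ≤
      36 * √b + 13 * ∑ ν ∈ Icc 1 V, 1 / (ν : ℝ) +
        4 * ‖∑ ν ∈ Ico ⌈A / b ^ 2⌉₊ ⌈A / a ^ 2⌉₊, stationaryWeight A ν * e (2 * √(A * ν))‖ := by
  have hb : 0 < b := ha.trans_le hab
  have hVb : A / b ^ 2 ≤ V := le_trans (by gcongr) hV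
  have hdiff := norm_sum_le_of_le (Icc 1 V) fun ν hν => norm_integral_e_sub_fresnelStep_le hA
    (show (0 : ℝ) < (ν : ℕ) by exact_mod_cast (Finset.mem_Icc.1 hν).1) ha hab
  rw [sum_sub_distrib, sum_mul_fresnelStep_sub hA ha hab hV, sum_add_distrib, sum_add_distrib]
    at hdiff
  set I := ∑ ν ∈ Icc 1 V, ∫ u in a..b, e (A / u + ν * u)
  set Y := ∑ ν ∈ Ico ⌈A / b ^ 2⌉₊ ⌈A / a ^ 2⌉₊, (stationaryWeight A ν : ℂ) * e (2 * √(A * ν))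
  have hY : ‖2 * fresnelLim * Y‖ ≤ 4 * ‖Y‖ := by
    rw [norm_mul, norm_mul, Complex.norm_ofNat]
    nlinarith [norm_fresnelLim_le, norm_nonneg Y]
  linarith [norm_sub_norm_le I (2 * fresnelLim * Y), Real.sqrt_le_sqrt hab,
    sum_fresnelError_le hA hb hVb, sum_fresnelError_le hA ha hV]

end StationaryPhaseSum

lemma norm_sum_mul_le_of_antitone {g : ℕ → ℝ} {z : ℕ → ℂ} {B : ℝ} (hg : Antitone g)
    (hg₀ : ∀ n, 0 ≤ g n) (l : ℕ) (hB : ∀ k ≤ l, ‖∑ n ∈ range k, z n‖ ≤ B) :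
    ‖∑ n ∈ range l, g n * z n‖ ≤ g 0 * B := by
  have hB₀ : 0 ≤ B := (norm_nonneg _).trans (hB 0 l.zero_le)
  have hsub (n : ℕ) : 0 ≤ g n - g (n + 1) := sub_nonneg.2 (hg n.le_succ)
  rcases l with _ | l
  · rw [range_zero, sum_empty, norm_zero]
    exact mul_nonneg (hg₀ 0) hB₀
  have hparts : ∑ n ∈ range (l + 1), g n * z n = g l * ∑ n ∈ range (l + 1), z n +
      ∑ n ∈ range l, (g n - g (n + 1) : ℝ) * ∑ i ∈ range (n + 1), z i := by
    have h := sum_range_by_parts (fun n => (g n : ℂ)) z (l + 1)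
    simp only [smul_eq_mul, add_tsub_cancel_right] at h
    rw [h, sub_eq_add_neg, ← sum_neg_distrib]
    congr 1
    refine sum_congr rfl fun n _ => ?_
    push_cast
    ring
  have hterm {x : ℝ} (hx : 0 ≤ x) {k : ℕ} (hk : k ≤ l + 1) :
      ‖(x : ℂ) * ∑ n ∈ range k, z n‖ ≤ x * B := by
    rw [norm_mul, Complex.norm_real, Real.norm_of_nonneg hx]
    exact mul_le_mul_of_nonneg_left (hB k hk) hx
  rw [hparts]
  calc _ ≤ g l * B + ∑ n ∈ range l, (g n - g (n + 1)) * B :=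
        (norm_add_le _ _).trans (add_le_add (hterm (hg₀ l) le_rfl)
          (norm_sum_le_of_le _ fun n hn => hterm (hsub n) (by rw [Finset.mem_range] at hn; lia)))
    _ = g 0 * B := by
        rw [← sum_mul, sum_range_sub']
        ring

lemma stationaryWeight_le {A ν m : ℝ} (hA : 0 ≤ A) (hm : 0 < m) (hν : m / 16 ≤ ν) :
    stationaryWeight A ν ≤ 8 * (A ^ (1 / 4 : ℝ) * m ^ (-(3 / 4) : ℝ)) := by
  have hν₀ : 0 < ν := by linarith
  have hrpow : √√(A / ν) / √ν = A ^ (1 / 4 : ℝ) * ν ^ (-(3 / 4) : ℝ) := by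
    rw [Real.sqrt_eq_rpow, Real.sqrt_eq_rpow, Real.sqrt_eq_rpow, ← Real.rpow_mul (by positivity),
      Real.div_rpow hA hν₀.le, div_div, ← Real.rpow_add hν₀, div_eq_mul_inv, ← Real.rpow_neg hν₀.le]
    norm_num
  have h16 : (16 : ℝ) ^ (3 / 4 : ℝ) = 8 := by
    rw [show (16 : ℝ) = 2 ^ 4 by norm_num, ← Real.rpow_natCast_mul zero_le_two]
    norm_num
  calc stationaryWeight A ν = A ^ (1 / 4 : ℝ) * ν ^ (-(3 / 4) : ℝ) := hrpow
    _ ≤ A ^ (1 / 4 : ℝ) * (m / 16) ^ (-(3 / 4) : ℝ) :=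
        mul_le_mul_of_nonneg_left (Real.rpow_le_rpow_of_nonpos (by positivity) hν (by norm_num))
          (by positivity)
    _ = 8 * (A ^ (1 / 4 : ℝ) * m ^ (-(3 / 4) : ℝ)) := by
        rw [Real.div_rpow hm.le (by norm_num), Real.rpow_neg (by norm_num : (0 : ℝ) ≤ 16), h16]
        ring

lemma exists_norm_dual_sum_le : ∃ C : ℝ, 0 ≤ C ∧ ∀ A m : ℝ, 0 < A → 0 < m → ∀ ν : ℕ, m / 16 ≤ ν →
    ‖∑ n ∈ Ico ν ⌈m⌉₊, stationaryWeight A n * e (2 * √(A * n))‖ ≤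
      C * (A ^ (21 / 80 : ℝ) * m ^ (11 / 80 : ℝ) + A ^ (19 / 80 : ℝ) * m ^ (19 / 80 : ℝ)) := by
  obtain ⟨C, hC, hsqrt⟩ := exists_norm_sum_e_sqrt_le
  refine ⟨8 * C, by positivity, fun A m hA hm ν hν => ?_⟩
  rcases le_or_gt ⌈m⌉₊ ν with hνm | hνm
  · rw [Ico_eq_empty_of_le hνm, sum_empty, norm_zero]
    positivity
  have hν₀ : 0 < ν := by exact_mod_cast (show (0 : ℝ) < m / 16 by positivity).trans_le hν
  have hm₁ : 1 ≤ m := by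
    have h := Nat.lt_ceil.1 hνm
    exact le_trans (by exact_mod_cast hν₀) h.le
  have hpart (k : ℕ) (hk : k ≤ ⌈m⌉₊ - ν) : ‖∑ n ∈ range k, e (2 * √(A * ((ν + n : ℕ) : ℝ)))‖ ≤
      C * (A ^ (1 / 80 : ℝ) * m ^ (71 / 80 : ℝ) + A ^ (-(1 / 80) : ℝ) * m ^ (79 / 80 : ℝ)) := by
    have hνk : ((ν + k : ℕ) : ℝ) ≤ ⌈m⌉₊ := by exact_mod_cast (by lia)
    push_cast at hνk ⊢
    exact hsqrt A m ν k hA hm₁ hν (hνk.trans (Nat.ceil_lt_add_one hm.le).le)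
  have hanti : Antitone fun n : ℕ => stationaryWeight A (ν + n : ℕ) := fun i j hij => by
    have hi : (0 : ℝ) < (ν + i : ℕ) := by positivity
    have hj : ((ν + i : ℕ) : ℝ) ≤ (ν + j : ℕ) := by exact_mod_cast (by lia)
    simp only [stationaryWeight]
    gcongr
  rw [sum_Ico_eq_sum_range]
  refine (norm_sum_mul_le_of_antitone hanti (fun n => by unfold stationaryWeight; positivity) _
    hpart).trans ?_
  rw [add_zero]
  calc _ ≤ 8 * (A ^ (1 / 4 : ℝ) * m ^ (-(3 / 4) : ℝ)) * (C *
          (A ^ (1 / 80 : ℝ) * m ^ (71 / 80 : ℝ) + A ^ (-(1 / 80) : ℝ) * m ^ (79 / 80 : ℝ))) :=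
        mul_le_mul_of_nonneg_right (stationaryWeight_le hA.le hm hν) (by positivity)
    _ = 8 * C * ((A ^ (1 / 4 : ℝ) * A ^ (1 / 80 : ℝ)) * (m ^ (-(3 / 4) : ℝ) * m ^ (71 / 80 : ℝ)) +
          (A ^ (1 / 4 : ℝ) * A ^ (-(1 / 80) : ℝ)) *
            (m ^ (-(3 / 4) : ℝ) * m ^ (79 / 80 : ℝ))) := by ring
    _ = _ := by
        simp only [← Real.rpow_add hA, ← Real.rpow_add hm]
        norm_num

/-! ### Poisson summation -/

section Poisson

lemma hasSum_cos_div_sq {x : ℝ} (hx : x ∈ Set.Icc 0 1) :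
    HasSum (fun n : ℕ => Real.cos (2 * Real.pi * (n + 1 : ℕ) * x) /
      (2 * Real.pi ^ 2 * (n + 1 : ℕ) ^ 2)) (bernoulliFun 2 x / 2) := by
  have h := (hasSum_nat_add_iff' 1).2
    ((hasSum_one_div_nat_pow_mul_cos one_ne_zero hx).div_const (2 * Real.pi ^ 2))
  rw [← bernoulliFun, range_one, sum_singleton, Nat.cast_zero, zero_pow (by norm_num), div_zero,
    zero_mul, zero_div, sub_zero] at h
  have hval : bernoulliFun 2 x / 2 =
      (-1) ^ (1 + 1) * (2 * Real.pi) ^ (2 * 1) / 2 / (2 * 1).factorial * bernoulliFun (2 * 1) x /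
        (2 * Real.pi ^ 2) := by
    rw [mul_one, Nat.factorial_two]
    field_simp
    norm_num
  rw [hval]
  exact h.congr_fun fun n => by field_simp; ring

lemma sin_two_pi_mul_natCast (n k : ℕ) : Real.sin (2 * Real.pi * n * k) = 0 := by
  rw [← Real.sin_nat_mul_pi (2 * n * k)]
  congr 1
  push_cast
  ring

lemma cos_two_pi_mul_sub_intCast (n : ℕ) (k : ℤ) (u : ℝ) :
    Real.cos (2 * Real.pi * n * (u - k)) = Real.cos (2 * Real.pi * n * u) := by
  rw [← Real.cos_sub_int_mul_two_pi (2 * Real.pi * n * u) (n * k)]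
  congr 1
  push_cast
  ring

lemma cos_two_pi_mul_natCast (n k : ℕ) : Real.cos (2 * Real.pi * n * k) = 1 := by
  rw [← Int.cast_natCast (R := ℝ) k, ← cos_two_pi_mul_sub_intCast n k, sub_self, mul_zero,
    Real.cos_zero]

lemma hasDerivAt_sin_div {n : ℕ} (hn : n ≠ 0) (u : ℝ) :
    HasDerivAt (fun u : ℝ => ((Real.sin (2 * Real.pi * n * u) / (Real.pi * n) : ℝ) : ℂ))
      (2 * Real.cos (2 * Real.pi * n * u) : ℝ) u := by
  refine HasDerivAt.ofReal_comp
    ((((hasDerivAt_id u).const_mul (2 * Real.pi * n)).sin.div_const _).congr_deriv ?_)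
  simp only [id]
  field_simp

lemma hasDerivAt_cos_div {n : ℕ} (hn : n ≠ 0) (u : ℝ) :
    HasDerivAt
      (fun u : ℝ => ((Real.cos (2 * Real.pi * n * u) / (2 * Real.pi ^ 2 * n ^ 2) : ℝ) : ℂ))
      (-(Real.sin (2 * Real.pi * n * u) / (Real.pi * n)) : ℝ) u := by
  refine HasDerivAt.ofReal_comp
    ((((hasDerivAt_id u).const_mul (2 * Real.pi * n)).cos.div_const _).congr_deriv ?_)
  simp only [id]
  field_simp

lemma hasDerivAt_bernoulliFun_sub (j : ℕ) (x u : ℝ) :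
    HasDerivAt (fun u : ℝ => ((bernoulliFun (j + 1) (u - x) / (j + 1) : ℝ) : ℂ))
      (bernoulliFun j (u - x) : ℝ) u := by
  refine HasDerivAt.ofReal_comp
    ((((hasDerivAt_bernoulliFun (j + 1) (u - x)).comp_sub_const u x).div_const _).congr_deriv ?_)
  push_cast
  exact mul_div_cancel_left₀ _ (by positivity)

variable {f f' f'' : ℝ → ℂ} {k : ℕ}

lemma integral_mul_two_mul_cos {n : ℕ} (hn : n ≠ 0)
    (hf : ∀ u ∈ Set.uIcc (k : ℝ) (k + 1), HasDerivAt f (f' u) u)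
    (hf' : ∀ u ∈ Set.uIcc (k : ℝ) (k + 1), HasDerivAt f' (f'' u) u)
    (hf'' : ContinuousOn f'' (Set.uIcc (k : ℝ) (k + 1))) :
    ∫ u in (k : ℝ)..(k + 1), f u * (2 * Real.cos (2 * Real.pi * n * u) : ℝ) =
      (f' (k + 1) - f' k) * (1 / (2 * Real.pi ^ 2 * n ^ 2) : ℝ) -
        ∫ u in (k : ℝ)..(k + 1),
          f'' u * (Real.cos (2 * Real.pi * n * u) / (2 * Real.pi ^ 2 * n ^ 2) : ℝ) := by
  have hcos : Continuous fun u : ℝ => ((2 * Real.cos (2 * Real.pi * n * u) : ℝ) : ℂ) := by fun_prop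
  have hsin : Continuous fun u : ℝ =>
      ((-(Real.sin (2 * Real.pi * n * u) / (Real.pi * n)) : ℝ) : ℂ) := by fun_prop
  have hcf' : ContinuousOn f' (Set.uIcc (k : ℝ) (k + 1)) := fun u hu =>
    (hf' u hu).continuousAt.continuousWithinAt
  have hfirst := intervalIntegral.integral_mul_deriv_eq_deriv_mul hf
    (fun u _ => hasDerivAt_sin_div hn u) hcf'.intervalIntegrable (hcos.intervalIntegrable _ _)
  have hsecond := intervalIntegral.integral_mul_deriv_eq_deriv_mul hf'
    (fun u _ => hasDerivAt_cos_div hn u) hf''.intervalIntegrable (hsin.intervalIntegrable _ _)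
  rw [← Nat.cast_add_one] at hfirst hsecond ⊢
  simp only [sin_two_pi_mul_natCast, cos_two_pi_mul_natCast, zero_div, Complex.ofReal_zero,
    mul_zero, sub_zero, zero_sub, Complex.ofReal_neg, mul_neg,
    intervalIntegral.integral_neg] at hfirst hsecond
  rw [hfirst, hsecond]
  ring

lemma integral_mul_bernoulliFun_two
    (hf : ∀ u ∈ Set.uIcc (k : ℝ) (k + 1), HasDerivAt f (f' u) u)
    (hf' : ∀ u ∈ Set.uIcc (k : ℝ) (k + 1), HasDerivAt f' (f'' u) u)
    (hf'' : ContinuousOn f'' (Set.uIcc (k : ℝ) (k + 1))) :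
    ∫ u in (k : ℝ)..(k + 1), f'' u * (bernoulliFun 2 (u - k) / 2 : ℝ) =
      (f' (k + 1) - f' k) * (bernoulliFun 2 0 / 2 : ℝ) -
        ((f k + f (k + 1)) / 2 - ∫ u in (k : ℝ)..(k + 1), f u) := by
  have hcf' : ContinuousOn f' (Set.uIcc (k : ℝ) (k + 1)) := fun u hu =>
    (hf' u hu).continuousAt.continuousWithinAt
  have hB : Continuous fun u : ℝ => ((bernoulliFun 1 (u - k) : ℝ) : ℂ) := by
    simp only [bernoulliFun_one]
    fun_prop
  have hfirst := intervalIntegral.integral_mul_deriv_eq_deriv_mul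
    (fun u _ => hasDerivAt_bernoulliFun_sub 1 k u) hf' (hB.intervalIntegrable _ _)
    hf''.intervalIntegrable
  have hsecond := intervalIntegral.integral_mul_deriv_eq_deriv_mul
    (fun u _ => hasDerivAt_bernoulliFun_sub 0 k u) hf
    ((continuous_const.congr fun _ => by rw [bernoulliFun_zero]).intervalIntegrable _ _)
    hcf'.intervalIntegrable
  simp only [mul_comm (f'' _)]
  norm_num [bernoulliFun_zero, bernoulliFun_one, bernoulliFun_two] at hfirst hsecond ⊢
  rw [hfirst, hsecond]
  ring

lemma hasSum_integral_mul_two_mul_cos_unit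
    (hf : ∀ u ∈ Set.uIcc (k : ℝ) (k + 1), HasDerivAt f (f' u) u)
    (hf' : ∀ u ∈ Set.uIcc (k : ℝ) (k + 1), HasDerivAt f' (f'' u) u)
    (hf'' : ContinuousOn f'' (Set.uIcc (k : ℝ) (k + 1))) :
    HasSum (fun n : ℕ => ∫ u in (k : ℝ)..(k + 1),
        f u * (2 * Real.cos (2 * Real.pi * (n + 1 : ℕ) * u) : ℝ))
      ((f k + f (k + 1)) / 2 - ∫ u in (k : ℝ)..(k + 1), f u) := by
  have hconst : HasSum (fun n : ℕ => 1 / (2 * Real.pi ^ 2 * (n + 1 : ℕ) ^ 2))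
      (bernoulliFun 2 0 / 2) := by
    refine (hasSum_cos_div_sq (Set.left_mem_Icc.2 zero_le_one)).congr_fun fun n => ?_
    rw [mul_zero, Real.cos_zero]
  have hint : HasSum (fun n : ℕ => ∫ u in (k : ℝ)..(k + 1), f'' u *
      (Real.cos (2 * Real.pi * (n + 1 : ℕ) * u) / (2 * Real.pi ^ 2 * (n + 1 : ℕ) ^ 2) : ℝ))
      (∫ u in (k : ℝ)..(k + 1), f'' u * (bernoulliFun 2 (u - k) / 2 : ℝ)) := by
    refine intervalIntegral.hasSum_integral_of_dominated_convergence
      (fun n u => ‖f'' u‖ * (1 / (2 * Real.pi ^ 2 * (n + 1 : ℕ) ^ 2))) (fun n => ?_)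
      (fun n => MeasureTheory.ae_of_all _ fun u _ => ?_)
      (MeasureTheory.ae_of_all _ fun u _ => hconst.summable.mul_left _) ?_
      (MeasureTheory.ae_of_all _ fun u hu => ?_)
    · exact ((hf''.mono Set.uIoc_subset_uIcc).aestronglyMeasurable measurableSet_uIoc).mul
        (by fun_prop)
    · rw [norm_mul, Complex.norm_real, Real.norm_eq_abs, abs_div,
        abs_of_nonneg (by positivity : 0 ≤ 2 * Real.pi ^ 2 * ((n + 1 : ℕ) : ℝ) ^ 2)]
      gcongr
      exact Real.abs_cos_le_one _
    · simp only [tsum_mul_left]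
      exact (hf''.norm.mul continuousOn_const).intervalIntegrable
    · rw [Set.uIoc_of_le (by linarith)] at hu
      have hcos (n : ℕ) := cos_two_pi_mul_sub_intCast n k u
      have h := hasSum_cos_div_sq ⟨sub_nonneg.2 hu.1.le, sub_le_iff_le_add'.2 hu.2⟩
      rw [Int.cast_natCast] at hcos
      simp only [hcos] at h
      exact (Complex.hasSum_ofReal.2 h).mul_left _
  have h := ((Complex.hasSum_ofReal.2 hconst).mul_left (f' (k + 1) - f' k)).sub hint
  rw [integral_mul_bernoulliFun_two hf hf' hf'', sub_sub_cancel] at h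
  exact h.congr_fun fun n => integral_mul_two_mul_cos n.succ_ne_zero hf hf' hf''

lemma hasSum_integral_mul_two_mul_cos {a b : ℕ} (hab : a ≤ b)
    (hf : ∀ u ∈ Set.Icc (a : ℝ) b, HasDerivAt f (f' u) u)
    (hf' : ∀ u ∈ Set.Icc (a : ℝ) b, HasDerivAt f' (f'' u) u)
    (hf'' : ContinuousOn f'' (Set.Icc (a : ℝ) b)) :
    HasSum (fun n : ℕ => ∫ u in (a : ℝ)..b,
        f u * (2 * Real.cos (2 * Real.pi * (n + 1 : ℕ) * u) : ℝ))
      (∑ k ∈ Ico a b, (f k + f (k + 1)) / 2 - ∫ u in (a : ℝ)..b, f u) := by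
  have hunit {k : ℕ} (hk : k ∈ Set.Ico a b) : Set.uIcc (k : ℝ) (k + 1) ⊆ Set.Icc (a : ℝ) b := by
    rw [Set.uIcc_of_le (by linarith)]
    exact Set.Icc_subset_Icc (by exact_mod_cast hk.1) (by exact_mod_cast hk.2)
  have hcont : ContinuousOn f (Set.Icc (a : ℝ) b) := fun u hu =>
    (hf u hu).continuousAt.continuousWithinAt
  have hsplit {g : ℝ → ℂ} (hg : ContinuousOn g (Set.Icc (a : ℝ) b)) :
      ∑ k ∈ Ico a b, ∫ u in (k : ℝ)..(k + 1), g u = ∫ u in (a : ℝ)..b, g u := by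
    have h := intervalIntegral.sum_integral_adjacent_intervals_Ico (f := g)
      (μ := MeasureTheory.volume) (a := fun k : ℕ => (k : ℝ)) hab fun k hk => by
        rw [Nat.cast_add_one]
        exact (hg.mono (hunit hk)).intervalIntegrable
    simpa only [Nat.cast_add_one] using h
  rw [← hsplit hcont, ← sum_sub_distrib]
  refine (hasSum_sum fun k hk => ?_).congr_fun fun n => (hsplit (hcont.mul ?_)).symm
  · have hk' := hunit (Finset.mem_Ico.1 hk)
    exact hasSum_integral_mul_two_mul_cos_unit (fun u hu => hf u (hk' hu))
      (fun u hu => hf' u (hk' hu)) (hf''.mono hk')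
  · fun_prop

end Poisson

lemma norm_le_add_div_of_hasSum {g : ℕ → ℂ} {S : ℂ} {K : ℝ} {V : ℕ} (hK : 0 ≤ K) (hV : V ≠ 0)
    (hg : HasSum (fun n => g (n + 1)) S) (htail : ∀ n, V < n → ‖g n‖ ≤ K / n ^ 2) :
    ‖S‖ ≤ ‖∑ n ∈ Icc 1 V, g n‖ + K / V := by
  refine le_of_tendsto hg.tendsto_sum_nat.norm ?_
  filter_upwards [eventually_ge_atTop V] with N hN
  have hsplit : ∑ n ∈ range N, g (n + 1) = ∑ n ∈ Icc 1 V, g n + ∑ n ∈ Ioc V N, g n := by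
    rw [range_eq_Ico, sum_Ico_add' g 0 N 1, ← Ico_add_one_right_eq_Icc,
      ← Ico_add_one_add_one_eq_Ioc, sum_Ico_consecutive _ (by lia) (by lia)]
  rw [hsplit]
  refine (norm_add_le _ _).trans (add_le_add_right ?_ _)
  calc ‖∑ n ∈ Ioc V N, g n‖ ≤ ∑ n ∈ Ioc V N, K * ((n : ℝ) ^ 2)⁻¹ :=
        norm_sum_le_of_le _ fun n hn => htail n (Finset.mem_Ioc.1 hn).1
    _ ≤ K * ((V : ℝ)⁻¹ - (N : ℝ)⁻¹) := by
        rw [← mul_sum]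
        exact mul_le_mul_of_nonneg_left (sum_Ioc_inv_sq_le_sub hV hN) hK
    _ ≤ K / V := mul_le_mul_of_nonneg_left (sub_le_self _ (by positivity)) hK

lemma sum_Ico_add_div_two (f : ℝ → ℂ) {a b : ℕ} (hab : a ≤ b) :
    ∑ k ∈ Ico a b, (f k + f (k + 1)) / 2 = ∑ n ∈ Ioc a b, f n + (f a - f b) / 2 := by
  have htel := sum_Ico_sub (fun n : ℕ => f n) hab
  rw [← Ico_add_one_add_one_eq_Ioc, ← sum_Ico_add' (fun n : ℕ => f n) a b 1, ← sub_eq_iff_eq_add',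
    ← sum_sub_distrib, ← neg_sub (f b), ← htel, ← sum_neg_distrib, sum_div]
  refine sum_congr rfl fun k _ => ?_
  push_cast
  ring

lemma e_add_e_neg (t : ℝ) : e t + e (-t) = (2 * Real.cos (2 * Real.pi * t) : ℝ) := by
  rw [e_eq_exp, e_eq_exp, mul_neg, Complex.exp_mul_I, Complex.exp_mul_I, Complex.ofReal_neg,
    Complex.cos_neg, Complex.sin_neg, ← Complex.ofReal_cos]
  push_cast
  ring

lemma e_sub_e_neg (t : ℝ) :
    e t - e (-t) = 2 * Complex.I * (Real.sin (2 * Real.pi * t) : ℝ) := by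
  rw [e_eq_exp, e_eq_exp, mul_neg, Complex.exp_mul_I, Complex.exp_mul_I, Complex.ofReal_neg,
    Complex.cos_neg, Complex.sin_neg, ← Complex.ofReal_sin]
  ring

section DivPhase

variable {A a b u : ℝ}

lemma hasDerivAt_e_div (hu : u ≠ 0) : HasDerivAt (fun u => e (A / u))
    (2 * Real.pi * Complex.I * (-A / u ^ 2 : ℝ) * e (A / u)) u :=
  hasDerivAt_e_comp (by simpa [neg_div] using hasDerivAt_div_add_mul A 0 hu)

lemma continuousOn_e_div_add_mul (A ν : ℝ) (ha : 0 < a) :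
    ContinuousOn (fun u => e (A / u + ν * u)) (Set.Icc a b) := fun _ hu =>
  (hasDerivAt_e_comp (hasDerivAt_div_add_mul A ν
    (ha.trans_le hu.1).ne')).continuousAt.continuousWithinAt

lemma hasDerivAt_div_mul_sq_sub {c μ : ℝ} (hu : μ * u ^ 2 - A ≠ 0) :
    HasDerivAt (fun u => c / (μ * u ^ 2 - A)) (-(2 * (c * μ) * u) / (μ * u ^ 2 - A) ^ 2) u := by
  refine (((((hasDerivAt_pow 2 u).const_mul μ).sub_const A).fun_inv hu).const_mul c).congr_deriv ?_
  field_simp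
  push_cast
  ring

lemma mul_sq_div_two_le_abs_mul_sq_sub {μ : ℝ} (hA : 0 < A) (ha : 0 < a) (hau : a ≤ u)
    (hμ : 2 * (A / a ^ 2) ≤ |μ|) : |μ| * a ^ 2 / 2 ≤ |μ * u ^ 2 - A| := by
  have hA' : A ≤ |μ| * a ^ 2 / 2 := by
    rw [mul_div_assoc', div_le_iff₀ (by positivity)] at hμ
    linarith
  have hua : |μ| * a ^ 2 ≤ |μ| * u ^ 2 := by gcongr
  have habs := abs_sub_abs_le_abs_sub (μ * u ^ 2) A
  rw [abs_mul, abs_of_pos hA, abs_of_nonneg (sq_nonneg u)] at habs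
  linarith

lemma norm_integral_div_sq_mul_e_le {μ : ℝ} (hA : 0 < A) (ha : 0 < a) (hab : a ≤ b)
    (hμ : 2 * (A / a ^ 2) ≤ |μ|) :
    ‖∫ u in a..b, (A / u ^ 2 : ℝ) * e (A / u + μ * u)‖ ≤ 2 * (A / a ^ 2) / |μ| := by
  have hpos (u : ℝ) (hu : u ∈ Set.Icc a b) : 0 < u := ha.trans_le hu.1
  have hμ0 : 0 < |μ| := lt_of_lt_of_le (by positivity) hμ
  have hden (u : ℝ) (hu : u ∈ Set.Icc a b) : |μ| * a ^ 2 / 2 ≤ |μ * u ^ 2 - A| :=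
    mul_sq_div_two_le_abs_mul_sq_sub hA ha hu.1 hμ
  have hne (u : ℝ) (hu : u ∈ Set.Icc a b) : μ * u ^ 2 - A ≠ 0 :=
    abs_pos.1 (lt_of_lt_of_le (by positivity) (hden u hu))
  obtain ⟨c, hc, hcμ⟩ : ∃ c : ℝ, |c| = 1 ∧ c * μ = -|μ| := by
    rcases le_total 0 μ with h | h
    · exact ⟨-1, by norm_num, by rw [abs_of_nonneg h, neg_one_mul]⟩
    · exact ⟨1, abs_one, by rw [abs_of_nonpos h, neg_neg, one_mul]⟩
  have hbound := norm_integral_mul_deriv_e_le (H := fun u => c * A / (μ * u ^ 2 - A))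
    (M := 2 * (A / a ^ 2) / |μ|) hab (fun u hu => hasDerivAt_div_mul_sq_sub (hne u hu))
    (fun u hu => hasDerivAt_div_add_mul A μ (hpos u hu).ne')
    (ContinuousOn.div (by fun_prop) (by fun_prop) fun u hu => pow_ne_zero 2 (hne u hu))
    (continuousOn_const.sub (continuousOn_const.div (by fun_prop) fun u hu =>
      pow_ne_zero 2 (hpos u hu).ne'))
    (fun u hu => ?_) (fun u hu => ?_)
  · have hint : ∫ u in a..b, (c * A / (μ * u ^ 2 - A) * (μ - A / u ^ 2) : ℝ) * e (A / u + μ * u) =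
        c * ∫ u in a..b, (A / u ^ 2 : ℝ) * e (A / u + μ * u) := by
      rw [← intervalIntegral.integral_const_mul]
      refine intervalIntegral.integral_congr fun u hu => ?_
      rw [Set.uIcc_of_le hab] at hu
      have := (hpos u hu).ne'
      have := hne u hu
      rw [← mul_assoc, ← Complex.ofReal_mul]
      congr 2
      field_simp
    rwa [hint, norm_mul, Complex.norm_real, Real.norm_eq_abs, hc, one_mul] at hbound
  · rw [abs_div, abs_mul, hc, one_mul, abs_of_pos hA]
    calc A / |μ * u ^ 2 - A| ≤ A / (|μ| * a ^ 2 / 2) := by gcongr; exact hden u hu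
      _ = 2 * (A / a ^ 2) / |μ| := by field_simp
  · have := hpos u hu
    rw [show c * A * μ = -(|μ| * A) by rw [mul_right_comm, hcμ, neg_mul], mul_neg, neg_mul, neg_neg]
    positivity

lemma continuousOn_deriv_deriv_e_div (A : ℝ) (ha : 0 < a) : ContinuousOn (fun u : ℝ =>
    2 * Real.pi * Complex.I * (2 * A / u ^ 3 : ℝ) * e (A / u) +
      2 * Real.pi * Complex.I * (-A / u ^ 2 : ℝ) *
        (2 * Real.pi * Complex.I * (-A / u ^ 2 : ℝ) * e (A / u))) (Set.Icc a b) := by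
  have hne (u : ℝ) (hu : u ∈ Set.Icc a b) : u ≠ 0 := (ha.trans_le hu.1).ne'
  have he : ContinuousOn (fun u => e (A / u)) (Set.Icc a b) := fun u hu =>
    (hasDerivAt_e_div (hne u hu)).continuousAt.continuousWithinAt
  have hpow (c : ℝ) (n : ℕ) : ContinuousOn (fun u : ℝ => ((c / u ^ n : ℝ) : ℂ)) (Set.Icc a b) :=
    Complex.continuous_ofReal.comp_continuousOn
      (continuousOn_const.div (by fun_prop) fun u hu => pow_ne_zero n (hne u hu))
  have hsq := hpow (-A) 2
  have hcube := hpow (2 * A) 3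
  fun_prop

lemma hasDerivAt_deriv_e_div (hu : u ≠ 0) :
    HasDerivAt (fun u => 2 * Real.pi * Complex.I * (-A / u ^ 2 : ℝ) * e (A / u))
      (2 * Real.pi * Complex.I * (2 * A / u ^ 3 : ℝ) * e (A / u) +
        2 * Real.pi * Complex.I * (-A / u ^ 2 : ℝ) *
          (2 * Real.pi * Complex.I * (-A / u ^ 2 : ℝ) * e (A / u))) u := by
  have hsq : HasDerivAt (fun u : ℝ => -A / u ^ 2) (2 * A / u ^ 3) u := by
    refine (((hasDerivAt_pow 2 u).fun_inv (pow_ne_zero 2 hu)).const_mul (-A)).congr_deriv ?_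
    field_simp
    push_cast
    ring
  exact (hsq.ofReal_comp.const_mul _).mul (hasDerivAt_e_div hu)

lemma hasSum_integral_e_div {a b : ℕ} (A : ℝ) (ha : 0 < a) (hab : a ≤ b) :
    HasSum (fun n : ℕ => ∫ u in (a : ℝ)..b,
        e (A / u) * (2 * Real.cos (2 * Real.pi * (n + 1 : ℕ) * u) : ℝ))
      (∑ n ∈ Ioc a b, e (A / n) + (e (A / a) - e (A / b)) / 2 - ∫ u in (a : ℝ)..b, e (A / u)) := by
  have hne (u : ℝ) (hu : u ∈ Set.Icc (a : ℝ) b) : u ≠ 0 :=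
    ((Nat.cast_pos.2 ha).trans_le hu.1).ne'
  have h := hasSum_integral_mul_two_mul_cos hab (fun u hu => hasDerivAt_e_div (A := A) (hne u hu))
    (fun u hu => hasDerivAt_deriv_e_div (hne u hu))
    (continuousOn_deriv_deriv_e_div A (Nat.cast_pos.2 ha))
  rwa [sum_Ico_add_div_two (fun u => e (A / u)) hab] at h

lemma integral_e_div_mul_two_mul_cos (A ν : ℝ) (ha : 0 < a) (hab : a ≤ b) :
    ∫ u in a..b, e (A / u) * (2 * Real.cos (2 * Real.pi * ν * u) : ℝ) =
      (∫ u in a..b, e (A / u + ν * u)) + ∫ u in a..b, e (A / u + -ν * u) := by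
  have hint (ν : ℝ) := (continuousOn_e_div_add_mul A ν (b := b) ha).intervalIntegrable_of_Icc hab
    (μ := MeasureTheory.volume)
  rw [← intervalIntegral.integral_add (hint _) (hint _)]
  refine intervalIntegral.integral_congr fun u _ => ?_
  rw [mul_assoc (2 * Real.pi), ← e_add_e_neg, mul_add, e_add, e_add, neg_mul]

lemma integral_e_div_mul_two_mul_cos_eq {a b ν : ℕ} (A : ℝ) (ha : 0 < a) (hab : a ≤ b)
    (hν : ν ≠ 0) : ∫ u in (a : ℝ)..b, e (A / u) * (2 * Real.cos (2 * Real.pi * ν * u) : ℝ) =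
      (1 / ν : ℝ) * ((∫ u in (a : ℝ)..b, (A / u ^ 2 : ℝ) * e (A / u + ν * u)) -
        ∫ u in (a : ℝ)..b, (A / u ^ 2 : ℝ) * e (A / u + -ν * u)) := by
  have ha' : (0 : ℝ) < a := Nat.cast_pos.2 ha
  have hab' : (a : ℝ) ≤ b := Nat.cast_le.2 hab
  have hne (u : ℝ) (hu : u ∈ Set.Icc (a : ℝ) b) : u ≠ 0 := (ha'.trans_le hu.1).ne'
  have hderiv : ContinuousOn (fun u : ℝ => 2 * Real.pi * Complex.I * (-A / u ^ 2 : ℝ) *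
      e (A / u)) (Set.Icc (a : ℝ) b) := fun u hu =>
    (hasDerivAt_deriv_e_div (hne u hu)).continuousAt.continuousWithinAt
  have hcos : Continuous fun u : ℝ => ((2 * Real.cos (2 * Real.pi * ν * u) : ℝ) : ℂ) := by
    fun_prop
  have hint (μ : ℝ) : IntervalIntegrable (fun u => ((A / u ^ 2 : ℝ) : ℂ) * e (A / u + μ * u))
      MeasureTheory.volume a b := by
    refine ContinuousOn.intervalIntegrable_of_Icc hab' (ContinuousOn.mul ?_
      (continuousOn_e_div_add_mul A μ ha'))
    exact Complex.continuous_ofReal.comp_continuousOn (continuousOn_const.div (by fun_prop)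
      fun u hu => pow_ne_zero 2 (hne u hu))
  have hparts := intervalIntegral.integral_mul_deriv_eq_deriv_mul (a := (a : ℝ)) (b := b)
    (fun u hu => hasDerivAt_e_div (A := A) (hne u (Set.uIcc_of_le hab' ▸ hu)))
    (fun u _ => hasDerivAt_sin_div hν u) (hderiv.intervalIntegrable_of_Icc hab')
    (hcos.intervalIntegrable _ _)
  -- The boundary terms vanish because the sine vanishes at the integers `a` and `b`.
  simp only [sin_two_pi_mul_natCast, zero_div, Complex.ofReal_zero, mul_zero, sub_zero,
    zero_sub] at hparts
  rw [hparts, ← intervalIntegral.integral_sub (hint _) (hint _),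
    ← intervalIntegral.integral_const_mul, ← intervalIntegral.integral_neg]
  refine intervalIntegral.integral_congr fun u _ => ?_
  have hsin := e_sub_e_neg (ν * u)
  rw [← mul_assoc (2 * Real.pi)] at hsin
  rw [e_add, e_add, neg_mul, ← mul_sub, ← mul_sub, hsin]
  push_cast
  field_simp

lemma norm_integral_e_div_mul_two_mul_cos_le {a b ν : ℕ} (hA : 0 < A) (ha : 0 < a) (hab : a ≤ b)
    (hν : 2 * (A / a ^ 2) ≤ ν) :
    ‖∫ u in (a : ℝ)..b, e (A / u) * (2 * Real.cos (2 * Real.pi * ν * u) : ℝ)‖ ≤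
      4 * (A / a ^ 2) / ν ^ 2 := by
  have ha' : (0 : ℝ) < a := Nat.cast_pos.2 ha
  have hν0 : (0 : ℝ) < ν := lt_of_lt_of_le (by positivity) hν
  have hbound (μ : ℝ) (hμ : |μ| = ν) :
      ‖∫ u in (a : ℝ)..b, (A / u ^ 2 : ℝ) * e (A / u + μ * u)‖ ≤ 2 * (A / a ^ 2) / ν :=
    hμ ▸ norm_integral_div_sq_mul_e_le hA ha' (Nat.cast_le.2 hab) (hν.trans_eq hμ.symm)
  rw [integral_e_div_mul_two_mul_cos_eq A ha hab (Nat.cast_pos.1 hν0).ne', norm_mul,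
    Complex.norm_real, Real.norm_eq_abs, abs_of_pos (by positivity)]
  calc _ ≤ 1 / (ν : ℝ) * (2 * (A / a ^ 2) / ν + 2 * (A / a ^ 2) / ν) := by
        gcongr
        exact (norm_sub_le _ _).trans (add_le_add (hbound _ (abs_of_pos hν0))
          (hbound _ (by rw [abs_neg, abs_of_pos hν0])))
    _ = 4 * (A / a ^ 2) / ν ^ 2 := by
        field_simp
        norm_num

end DivPhase

section DivSum

lemma norm_sum_e_div_le {A : ℝ} {a b V : ℕ} (hA : 0 < A) (ha : 0 < a) (hab : a ≤ b)
    (hV : 2 * (A / a ^ 2) ≤ V) :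
    ‖∑ n ∈ Ioc a b, e (A / n)‖ ≤ 3 + b ^ 2 / A + ∑ ν ∈ Icc 1 V, 1 / (ν : ℝ) +
      ‖∑ ν ∈ Icc 1 V, ∫ u in (a : ℝ)..b, e (A / u + ν * u)‖ := by
  have ha' : (0 : ℝ) < a := Nat.cast_pos.2 ha
  have hab' : (a : ℝ) ≤ b := Nat.cast_le.2 hab
  have hm : 0 < A / (a : ℝ) ^ 2 := by positivity
  have hV0 : (0 : ℝ) < V := by linarith
  set I := ∫ u in (a : ℝ)..b, e (A / u)
  have hneg {μ : ℝ} (hμ : 0 ≤ μ) := norm_integral_e_div_sub_mul_le hA ha' hab' hμ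
  have hIle : ‖I‖ ≤ b ^ 2 / A := by
    simpa only [neg_zero, zero_mul, add_zero, one_div_div] using hneg le_rfl
  have hpoisson := norm_le_add_div_of_hasSum (by positivity) (Nat.cast_pos.1 hV0).ne'
    (g := fun n : ℕ => ∫ u in (a : ℝ)..b, e (A / u) * (2 * Real.cos (2 * Real.pi * n * u) : ℝ))
    (hasSum_integral_e_div A ha hab) fun n hn => norm_integral_e_div_mul_two_mul_cos_le hA ha hab
      (hV.trans (Nat.cast_le.2 hn.le))
  have htail : 4 * (A / a ^ 2) / V ≤ 2 := by
    rw [div_le_iff₀ hV0]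
    linarith
  have hnegsum : ‖∑ ν ∈ Icc 1 V, ∫ u in (a : ℝ)..b, e (A / u + -ν * u)‖ ≤
      ∑ ν ∈ Icc 1 V, 1 / (ν : ℝ) := norm_sum_le_of_le _ fun ν hν => by
    have hν0 : (0 : ℝ) < ν := Nat.cast_pos.2 (Finset.mem_Icc.1 hν).1
    refine (hneg hν0.le).trans ?_
    gcongr
    exact le_add_of_nonneg_left (by positivity)
  simp only [integral_e_div_mul_two_mul_cos A _ ha' hab', sum_add_distrib] at hpoisson
  have hend : ‖(e (A / a) - e (A / b)) / 2‖ ≤ 1 := by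
    rw [norm_div, Complex.norm_ofNat, div_le_one two_pos]
    exact (norm_sub_le _ _).trans_eq (by rw [norm_e, norm_e, one_add_one_eq_two])
  have htri (S E P N : ℂ) (hE : ‖E‖ ≤ 1) (hS : ‖S + E - I‖ ≤ ‖P + N‖ + 4 * (A / a ^ 2) / V) :
      ‖S‖ ≤ 3 + b ^ 2 / A + ‖N‖ + ‖P‖ := by
    have hsplit := norm_add_le ((S + E - I) + I) (-E)
    rw [sub_add_cancel, add_neg_cancel_right, norm_neg] at hsplit
    have hSI := norm_add_le (S + E - I) I
    rw [sub_add_cancel] at hSI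
    linarith [norm_add_le P N]
  exact (htri _ _ _ _ hend hpoisson).trans (by gcongr)

lemma sum_one_div_le_mul_rpow {V : ℕ} {y : ℝ} (hy : 1 ≤ y) (hV : V ≤ 3 * y) :
    ∑ ν ∈ Icc 1 V, 1 / (ν : ℝ) ≤ 8 * y ^ (19 / 40 : ℝ) := by
  have hharmonic : ∑ ν ∈ Icc 1 V, 1 / (ν : ℝ) ≤ 1 + Real.log V := by
    have h := harmonic_le_one_add_log V
    rw [harmonic_eq_sum_Icc] at h
    push_cast at h
    simpa only [one_div] using h
  have hthree : (3 : ℝ) ^ (19 / 40 : ℝ) ≤ 3 :=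
    Real.rpow_le_self_of_one_le (by norm_num) (by norm_num)
  have hlog : Real.log V ≤ 7 * y ^ (19 / 40 : ℝ) := by
    calc Real.log V ≤ (V : ℝ) ^ (19 / 40 : ℝ) / (19 / 40) :=
          Real.log_le_rpow_div (Nat.cast_nonneg V) (by norm_num)
      _ ≤ (3 * y) ^ (19 / 40 : ℝ) / (19 / 40) := by gcongr
      _ = 3 ^ (19 / 40 : ℝ) * y ^ (19 / 40 : ℝ) / (19 / 40) := by
          rw [Real.mul_rpow (by norm_num) (by linarith)]
      _ ≤ 3 * y ^ (19 / 40 : ℝ) / (19 / 40) := by gcongr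
      _ ≤ 7 * y ^ (19 / 40 : ℝ) := by
          linarith [Real.one_le_rpow hy (by norm_num : 0 ≤ (19 / 40 : ℝ))]
  linarith [Real.one_le_rpow hy (by norm_num : 0 ≤ (19 / 40 : ℝ))]

lemma sqrt_le_rpow_mul_rpow {A a : ℝ} (ha : 1 ≤ a) (hA : a ^ 2 ≤ A) :
    √a ≤ A ^ (2 / 5 : ℝ) * a ^ (-(11 / 40) : ℝ) := by
  have ha0 : 0 < a := by linarith
  calc √a = a ^ (1 / 2 : ℝ) := Real.sqrt_eq_rpow a
    _ ≤ a ^ (2 * (2 / 5) + -(11 / 40) : ℝ) := Real.rpow_le_rpow_of_exponent_le ha (by norm_num)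
    _ = (a ^ 2) ^ (2 / 5 : ℝ) * a ^ (-(11 / 40) : ℝ) := by
        rw [Real.rpow_add ha0, Real.rpow_mul ha0.le, Real.rpow_two]
    _ ≤ A ^ (2 / 5 : ℝ) * a ^ (-(11 / 40) : ℝ) := by gcongr

lemma rpow_mul_div_sq_rpow {A a : ℝ} (hA : 0 < A) (ha : 0 < a) (p q : ℝ) :
    A ^ p * (A / a ^ 2) ^ q = A ^ (p + q) * a ^ (-(2 * q)) := by
  rw [Real.div_rpow hA.le (by positivity), ← Real.rpow_two, ← Real.rpow_mul ha.le,
    Real.rpow_add hA, Real.rpow_neg ha.le]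
  ring

lemma exists_norm_dual_sum_Ico_le : ∃ C : ℝ, 0 ≤ C ∧ ∀ A a b : ℝ, 0 < A → 0 < a → a ≤ b →
    b ≤ 4 * a → ‖∑ ν ∈ Ico ⌈A / b ^ 2⌉₊ ⌈A / a ^ 2⌉₊, stationaryWeight A ν * e (2 * √(A * ν))‖ ≤
      C * (A ^ (2 / 5 : ℝ) * a ^ (-(11 / 40) : ℝ) + (A / a) ^ (19 / 40 : ℝ)) := by
  obtain ⟨C, hC, hdual⟩ := exists_norm_dual_sum_le
  refine ⟨C, hC, fun A a b hA ha hab hb4 => ?_⟩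
  have hlow : A / a ^ 2 / 16 ≤ ⌈A / b ^ 2⌉₊ := by
    refine le_trans ?_ (Nat.le_ceil _)
    rw [div_div]
    have : 0 < b := by linarith
    gcongr
    nlinarith
  refine (hdual A (A / a ^ 2) hA (by positivity) _ hlow).trans_eq ?_
  rw [rpow_mul_div_sq_rpow hA ha, rpow_mul_div_sq_rpow hA ha, Real.div_rpow hA.le ha.le,
    div_eq_mul_inv (A ^ _), ← Real.rpow_neg ha.le]
  norm_num

/-- The exponent pair `(2 / 5, 21 / 40)` for the phase `A / n`. -/
lemma exists_norm_sum_e_div_le : ∃ C : ℝ, 0 ≤ C ∧ ∀ (A : ℝ) (a b : ℕ), 0 < a → a ≤ b →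
    b ≤ 4 * a → (a : ℝ) ^ 2 ≤ A → ‖∑ n ∈ Ioc a b, e (A / n)‖ ≤
      C * (A ^ (2 / 5 : ℝ) * (a : ℝ) ^ (-(11 / 40) : ℝ) + (A / a) ^ (19 / 40 : ℝ)) := by
  obtain ⟨C, hC, hdual⟩ := exists_norm_dual_sum_Ico_le
  refine ⟨4 * C + 131, by positivity, fun A a b ha hab hb4 haA => ?_⟩
  have ha1 : (1 : ℝ) ≤ a := Nat.one_le_cast.2 ha
  have ha0 : (0 : ℝ) < a := by linarith
  have hab' : (a : ℝ) ≤ b := Nat.cast_le.2 hab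
  have hb4' : (b : ℝ) ≤ 4 * a := by exact_mod_cast hb4
  have hA : 0 < A := lt_of_lt_of_le (by positivity) haA
  have hm1 : 1 ≤ A / (a : ℝ) ^ 2 := (one_le_div (by positivity)).2 haA
  have hmA : A / (a : ℝ) ^ 2 ≤ A / a := by
    gcongr
    exact le_self_pow₀ ha1 two_ne_zero
  have hV : 2 * (A / (a : ℝ) ^ 2) ≤ ⌈2 * (A / (a : ℝ) ^ 2)⌉₊ := Nat.le_ceil _
  have hV3 : (⌈2 * (A / (a : ℝ) ^ 2)⌉₊ : ℝ) ≤ 3 * (A / a) := by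
    linarith [Nat.ceil_lt_add_one (by linarith : 0 ≤ 2 * (A / (a : ℝ) ^ 2))]
  have hsum := norm_sum_e_div_le hA ha hab hV
  have hint := norm_sum_integral_e_le hA ha0 hab' (by linarith : _ ≤ (⌈2 * (A / (a : ℝ) ^ 2)⌉₊ : ℝ))
  have hbA : (b : ℝ) ^ 2 / A ≤ 16 := by
    rw [div_le_iff₀ hA]
    nlinarith
  have hsqrt : √(b : ℝ) ≤ 2 * (A ^ (2 / 5 : ℝ) * (a : ℝ) ^ (-(11 / 40) : ℝ)) := by
    refine le_trans ?_ (mul_le_mul_of_nonneg_left (sqrt_le_rpow_mul_rpow ha1 haA) two_pos.le)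
    rw [Real.sqrt_le_left (by positivity), mul_pow, Real.sq_sqrt ha0.le]
    linarith
  have hY0 : 0 ≤ A ^ (2 / 5 : ℝ) * (a : ℝ) ^ (-(11 / 40) : ℝ) := by positivity
  have hX1 : 1 ≤ (A / a) ^ (19 / 40 : ℝ) := Real.one_le_rpow (hm1.trans hmA) (by norm_num)
  linarith [hdual A a b hA ha0 hab' hb4', sum_one_div_le_mul_rpow (hm1.trans hmA) hV3]

end DivSum

/-! ### The sawtooth function -/

/-- The **sawtooth function** `ψ(t) = {t} - 1/2`, normalized to be right-continuous: its value at
integers is `-1/2`. -/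
noncomputable def sawtooth (t : ℝ) : ℝ := Int.fract t - 1 / 2

lemma abs_sawtooth_le (t : ℝ) : |sawtooth t| ≤ 1 / 2 := by
  rw [sawtooth, abs_le]
  constructor <;> linarith [Int.fract_nonneg t, Int.fract_lt_one t]

lemma bernoulliFun_two_fract_sub_le (t d : ℝ) :
    bernoulliFun 2 (Int.fract (t + d)) - bernoulliFun 2 (Int.fract t) ≤
      2 * d * sawtooth t + d ^ 2 := by
  set y := Int.fract t + d with hy
  have hfract : Int.fract (t + d) = y - ⌊y⌋ := by
    rw [Int.self_sub_floor, hy, ← Int.self_sub_floor t, sub_add_eq_add_sub, Int.fract_sub_intCast]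
  have hfloor : 0 ≤ (⌊y⌋ : ℝ) * (2 * y - ⌊y⌋ - 1) := by
    have hle := Int.floor_le y
    have hlt := Int.lt_floor_add_one y
    rcases lt_trichotomy ⌊y⌋ 0 with h | h | h
    · have : (⌊y⌋ : ℝ) ≤ -1 := by exact_mod_cast Int.le_sub_one_of_lt h
      nlinarith
    · rw [h, Int.cast_zero, zero_mul]
    · have : (1 : ℝ) ≤ ⌊y⌋ := by exact_mod_cast h
      nlinarith
  rw [hfract, bernoulliFun_two, bernoulliFun_two, sawtooth, eq_sub_of_add_eq hy.symm]
  linarith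

lemma hasSum_cos_div_sq_fract (t : ℝ) :
    HasSum (fun n : ℕ => Real.cos (2 * Real.pi * (n + 1 : ℕ) * t) /
      (2 * Real.pi ^ 2 * (n + 1 : ℕ) ^ 2)) (bernoulliFun 2 (Int.fract t) / 2) := by
  have h := hasSum_cos_div_sq ⟨Int.fract_nonneg t, (Int.fract_lt_one t).le⟩
  simpa only [← Int.self_sub_floor, cos_two_pi_mul_sub_intCast] using h

lemma norm_e_sub_one_le (t : ℝ) : ‖e t - 1‖ ≤ 2 * min 1 (Real.pi * |t|) := by
  have hpi : Real.pi * |t| = |Real.pi * t| := by rw [abs_mul, abs_of_pos Real.pi_pos]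
  rw [norm_e_sub_one, hpi]
  gcongr
  exact le_min (Real.abs_sin_le_one _) Real.abs_sin_le_abs

section Smoothing

variable {ι : Type*} {s : Finset ι} {t : ι → ℝ} {w : ℕ → ℝ} {d δ W : ℝ}

lemma hasSum_re_e_sub_one_mul_sum_e (s : Finset ι) (t : ι → ℝ) (d : ℝ) :
    HasSum (fun h : ℕ => ((e ((h + 1 : ℕ) * d) - 1) * ∑ n ∈ s, e ((h + 1 : ℕ) * t n)).re /
        (Real.pi ^ 2 * (h + 1 : ℕ) ^ 2))
      (∑ n ∈ s, (bernoulliFun 2 (Int.fract (t n + d)) - bernoulliFun 2 (Int.fract (t n)))) := by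
  have hre (y : ℝ) : (e y).re = Real.cos (2 * Real.pi * y) := by
    rw [e_eq_exp, Complex.exp_ofReal_mul_I_re]
  have hsum := (hasSum_sum (s := s) fun n _ =>
    (hasSum_cos_div_sq_fract (t n + d)).sub (hasSum_cos_div_sq_fract (t n))).mul_left 2
  have hval : ∑ n ∈ s, (bernoulliFun 2 (Int.fract (t n + d)) - bernoulliFun 2 (Int.fract (t n))) =
      2 * ∑ n ∈ s, (bernoulliFun 2 (Int.fract (t n + d)) / 2 -
        bernoulliFun 2 (Int.fract (t n)) / 2) := by
    rw [mul_sum]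
    exact sum_congr rfl fun n _ => by ring
  rw [hval]
  refine hsum.congr_fun fun h => ?_
  rw [mul_sum, mul_sum, Complex.re_sum, sum_div]
  refine sum_congr rfl fun n _ => ?_
  rw [sub_mul, one_mul, ← e_add, Complex.sub_re, hre, hre, ← mul_add, add_comm d,
    ← mul_assoc, ← mul_assoc]
  field_simp

lemma norm_e_mul_sub_one_div_le (hd : d ≠ 0) {h : ℝ} (hh : 0 < h) :
    ‖e (h * d) - 1‖ / (Real.pi ^ 2 * h ^ 2) ≤ |d| * min (1 / h) (1 / (|d| * h ^ 2)) := by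
  have hd' : 0 < |d| := abs_pos.2 hd
  rw [div_le_iff₀ (by positivity)]
  refine (norm_e_sub_one_le _).trans ?_
  rw [abs_mul, abs_of_pos hh]
  rcases min_cases (1 / h) (1 / (|d| * h ^ 2)) with ⟨hmin, -⟩ | ⟨hmin, -⟩ <;> rw [hmin]
  · calc 2 * min 1 (Real.pi * (h * |d|)) ≤ Real.pi * (Real.pi * (h * |d|)) := by
          gcongr
          · exact Real.two_le_pi
          · exact min_le_right _ _
      _ = |d| * (1 / h) * (Real.pi ^ 2 * h ^ 2) := by field_simp
  · calc 2 * min 1 (Real.pi * (h * |d|)) ≤ 2 * 1 := by gcongr; exact min_le_left _ _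
      _ ≤ Real.pi ^ 2 := by nlinarith [Real.two_le_pi]
      _ = |d| * (1 / (|d| * h ^ 2)) * (Real.pi ^ 2 * h ^ 2) := by field_simp

lemma abs_sum_bernoulliFun_two_sub_le (hd : d ≠ 0) (hw : HasSum w W)
    (hle : ∀ h : ℕ, min (1 / ((h + 1 : ℕ) : ℝ)) (1 / (|d| * ((h + 1 : ℕ) : ℝ) ^ 2)) *
      ‖∑ n ∈ s, e ((h + 1 : ℕ) * t n)‖ ≤ w h) :
    |∑ n ∈ s, (bernoulliFun 2 (Int.fract (t n + d)) - bernoulliFun 2 (Int.fract (t n)))| ≤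
      |d| * W := by
  rw [← (hasSum_re_e_sub_one_mul_sum_e s t d).tsum_eq, ← Real.norm_eq_abs]
  refine tsum_of_norm_bounded (hw.mul_left |d|) fun h => ?_
  have hh : (0 : ℝ) < (h + 1 : ℕ) := by positivity
  set S := ∑ n ∈ s, e ((h + 1 : ℕ) * t n)
  calc ‖((e ((h + 1 : ℕ) * d) - 1) * S).re / (Real.pi ^ 2 * (h + 1 : ℕ) ^ 2)‖
      ≤ ‖(e ((h + 1 : ℕ) * d) - 1) * S‖ / (Real.pi ^ 2 * (h + 1 : ℕ) ^ 2) := by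
        rw [norm_div, Real.norm_of_nonneg
          (by positivity : 0 ≤ Real.pi ^ 2 * ((h + 1 : ℕ) : ℝ) ^ 2)]
        gcongr
        exact Complex.abs_re_le_norm _
    _ = ‖e ((h + 1 : ℕ) * d) - 1‖ / (Real.pi ^ 2 * (h + 1 : ℕ) ^ 2) * ‖S‖ := by
        rw [norm_mul, mul_div_right_comm]
    _ ≤ |d| * min (1 / ((h + 1 : ℕ) : ℝ)) (1 / (|d| * ((h + 1 : ℕ) : ℝ) ^ 2)) * ‖S‖ := by
        gcongr
        exact norm_e_mul_sub_one_div_le hd hh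
    _ ≤ |d| * w h := by
        rw [mul_assoc]
        gcongr
        exact hle h

lemma abs_sum_sawtooth_le (hδ : 0 < δ) (hw : HasSum w W)
    (hle : ∀ h : ℕ, min (1 / ((h + 1 : ℕ) : ℝ)) (1 / (δ * ((h + 1 : ℕ) : ℝ) ^ 2)) *
      ‖∑ n ∈ s, e ((h + 1 : ℕ) * t n)‖ ≤ w h) :
    |∑ n ∈ s, sawtooth (t n)| ≤ (δ * #s + W) / 2 := by
  have hbound (d : ℝ) (hd : |d| = δ) : -(2 * d * ∑ n ∈ s, sawtooth (t n)) ≤ δ * (δ * #s + W) := by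
    have hsmooth := sum_le_sum fun n (_ : n ∈ s) => bernoulliFun_two_fract_sub_le (t n) d
    have hfourier := abs_sum_bernoulliFun_two_sub_le (abs_pos.1 (hd ▸ hδ)) hw (hd ▸ hle)
    rw [sum_add_distrib, ← mul_sum, sum_const, nsmul_eq_mul, ← sq_abs, hd] at hsmooth
    rw [hd] at hfourier
    linarith [neg_abs_le (∑ n ∈ s, (bernoulliFun 2 (Int.fract (t n + d)) -
      bernoulliFun 2 (Int.fract (t n))))]
  have hpos := hbound δ (abs_of_pos hδ)
  have hneg := hbound (-δ) (by rw [abs_neg, abs_of_pos hδ])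
  rw [abs_le]
  constructor <;> refine le_of_mul_le_mul_left ?_ hδ <;> linarith

end Smoothing

lemma min_one_div_mul_rpow_le {h K p ε : ℝ} (hh : 0 < h) (hK : 0 < K) (hp : 0 ≤ p + ε)
    (hp' : p + ε ≤ 1) :
    min (1 / h) (K / h ^ 2) * h ^ p ≤ K ^ (p + ε) * h ^ (-(1 + ε)) := by
  have hmin : min 1 (K / h) ≤ (K / h) ^ (p + ε) := by
    rcases le_total (K / h) 1 with hle | hle
    · refine (min_le_right _ _).trans ?_
      simpa only [Real.rpow_one] using
        Real.rpow_le_rpow_of_exponent_ge (by positivity) hle hp'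
    · exact (min_le_left _ _).trans (Real.one_le_rpow hle hp)
  calc min (1 / h) (K / h ^ 2) * h ^ p = min 1 (K / h) * (h ^ p / h) := by
        rw [sq, ← div_div, min_div_div_right hh.le]
        ring
    _ ≤ (K / h) ^ (p + ε) * (h ^ p / h) := by gcongr
    _ = K ^ (p + ε) * h ^ (-(1 + ε)) := by
        rw [Real.div_rpow hK.le hh.le, ← Real.rpow_sub_one hh.ne', div_mul_eq_mul_div,
          mul_div_assoc, ← Real.rpow_sub hh]
        ring_nf

lemma min_one_div_mul_le {h K p q ε C Y Z S : ℝ} (hh : 0 < h) (hK : 0 < K) (hp : 0 ≤ p + ε)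
    (hp' : p + ε ≤ 1) (hq : 0 ≤ q + ε) (hq' : q + ε ≤ 1) (hC : 0 ≤ C) (hY : 0 ≤ Y) (hZ : 0 ≤ Z)
    (hS : S ≤ C * (h ^ p * Y + h ^ q * Z)) :
    min (1 / h) (K / h ^ 2) * S ≤ C * (K ^ (p + ε) * Y + K ^ (q + ε) * Z) * h ^ (-(1 + ε)) := by
  have hmin : 0 ≤ min (1 / h) (K / h ^ 2) := by positivity
  have hpK := min_one_div_mul_rpow_le hh hK hp hp'
  have hqK := min_one_div_mul_rpow_le hh hK hq hq'
  set μ := min (1 / h) (K / h ^ 2)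
  calc μ * S ≤ μ * (C * (h ^ p * Y + h ^ q * Z)) := by gcongr
    _ = C * (μ * h ^ p * Y + μ * h ^ q * Z) := by ring
    _ ≤ C * (K ^ (p + ε) * h ^ (-(1 + ε)) * Y + K ^ (q + ε) * h ^ (-(1 + ε)) * Z) := by gcongr
    _ = C * (K ^ (p + ε) * Y + K ^ (q + ε) * Z) * h ^ (-(1 + ε)) := by ring

lemma exists_abs_sum_sawtooth_div_le_add {ε : ℝ} (hε : 0 < ε) (hε' : ε ≤ 21 / 40) :
    ∃ C : ℝ, 0 ≤ C ∧ ∀ (x δ : ℝ) (a b : ℕ), 0 < a → a ≤ b → b ≤ 4 * a → (a : ℝ) ^ 2 ≤ x → 0 < δ →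
      |∑ n ∈ Ioc a b, sawtooth (x / n)| ≤ 2 * δ * a +
        C * ((1 / δ) ^ (2 / 5 + ε) * (x ^ (2 / 5 : ℝ) * (a : ℝ) ^ (-(11 / 40) : ℝ)) +
          (1 / δ) ^ (19 / 40 + ε) * (x / a) ^ (19 / 40 : ℝ)) := by
  obtain ⟨C, hC, hexp⟩ := exists_norm_sum_e_div_le
  have hsummable : Summable fun h : ℕ => ((h + 1 : ℕ) : ℝ) ^ (-(1 + ε)) :=
    (summable_nat_add_iff 1).2 (Real.summable_nat_rpow.2 (by linarith))
  refine ⟨C * (∑' h : ℕ, ((h + 1 : ℕ) : ℝ) ^ (-(1 + ε))) / 2, by positivity,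
    fun x δ a b ha hab hb hax hδ => ?_⟩
  have ha' : (1 : ℝ) ≤ a := Nat.one_le_cast.2 ha
  have hx : 0 < x := by nlinarith
  set B := (1 / δ) ^ (2 / 5 + ε) * (x ^ (2 / 5 : ℝ) * (a : ℝ) ^ (-(11 / 40) : ℝ)) +
    (1 / δ) ^ (19 / 40 + ε) * (x / a) ^ (19 / 40 : ℝ)
  have hterm (h : ℕ) : min (1 / ((h + 1 : ℕ) : ℝ)) (1 / (δ * ((h + 1 : ℕ) : ℝ) ^ 2)) *
      ‖∑ n ∈ Ioc a b, e ((h + 1 : ℕ) * (x / n))‖ ≤ C * B * ((h + 1 : ℕ) : ℝ) ^ (-(1 + ε)) := by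
    have hh : (1 : ℝ) ≤ (h + 1 : ℕ) := Nat.one_le_cast.2 h.succ_pos
    have hax' : (a : ℝ) ^ 2 ≤ (h + 1 : ℕ) * x := by nlinarith
    have hS := hexp ((h + 1 : ℕ) * x) a b ha hab hb hax'
    simp only [mul_div_assoc] at hS
    rw [Real.mul_rpow (by positivity) hx.le, Real.mul_rpow (by positivity) (by positivity),
      mul_assoc] at hS
    rw [← div_div 1 δ]
    exact min_one_div_mul_le (by positivity) (by positivity) (by linarith) (by linarith)
      (by linarith) (by linarith) hC (by positivity) (by positivity) hS
  have hcard : (#(Ioc a b) : ℝ) ≤ 4 * a := by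
    rw [Nat.card_Ioc]
    exact_mod_cast (Nat.sub_le b a).trans hb
  calc |∑ n ∈ Ioc a b, sawtooth (x / n)|
      ≤ (δ * #(Ioc a b) + C * B * ∑' h : ℕ, ((h + 1 : ℕ) : ℝ) ^ (-(1 + ε))) / 2 :=
        abs_sum_sawtooth_le hδ (hsummable.hasSum.mul_left _) hterm
    _ ≤ (δ * (4 * a) + C * B * ∑' h : ℕ, ((h + 1 : ℕ) : ℝ) ^ (-(1 + ε))) / 2 := by gcongr
    _ = _ := by ring

lemma div_rpow_mul_rpow_le {x a t α β γ : ℝ} (hx : 1 ≤ x) (ha : 0 < a) (hax : a ^ 2 ≤ x)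
    (hγ : γ ≤ α) (ht : (α - γ) / 2 + β ≤ t * (1 + α)) :
    (a / x ^ t) ^ α * (x ^ β * a ^ (-γ)) ≤ x ^ t := by
  have hx0 : 0 < x := by linarith
  have hsqrt : a ≤ x ^ (1 / 2 : ℝ) := by
    rw [← Real.sqrt_eq_rpow]
    exact Real.le_sqrt_of_sq_le hax
  calc (a / x ^ t) ^ α * (x ^ β * a ^ (-γ)) = a ^ (α - γ) * x ^ (β - t * α) := by
        rw [Real.div_rpow ha.le (by positivity), ← Real.rpow_mul hx0.le, Real.rpow_sub hx0,
          sub_eq_add_neg α, Real.rpow_add ha]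
        ring
    _ ≤ (x ^ (1 / 2 : ℝ)) ^ (α - γ) * x ^ (β - t * α) := by
        gcongr
    _ = x ^ (1 / 2 * (α - γ) + (β - t * α)) := by
        rw [← Real.rpow_mul hx0.le, ← Real.rpow_add hx0]
    _ ≤ x ^ t := Real.rpow_le_rpow_of_exponent_le hx (by linarith)

lemma exists_abs_sum_sawtooth_div_Ioc_le {t : ℝ} (ht : 37 / 112 < t) (ht' : t ≤ 1 / 2) :
    ∃ C : ℝ, 0 ≤ C ∧ ∀ (x : ℝ) (a b : ℕ), 0 < a → a ≤ b → b ≤ 4 * a → (a : ℝ) ^ 2 ≤ x →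
      |∑ n ∈ Ioc a b, sawtooth (x / n)| ≤ C * x ^ t := by
  obtain ⟨C, hC, hle⟩ := exists_abs_sum_sawtooth_div_le_add (ε := t - 37 / 112) (by linarith)
    (by linarith)
  refine ⟨2 + 2 * C, by positivity, fun x a b ha hab hb hax => ?_⟩
  have ha' : (1 : ℝ) ≤ a := Nat.one_le_cast.2 ha
  have ha0 : (0 : ℝ) < a := by linarith
  have hx : 1 ≤ x := by nlinarith
  have hxt : 0 < x ^ t := by positivity
  have h := hle x (x ^ t / a) a b ha hab hb hax (by positivity)
  rw [one_div_div, Real.div_rpow (by linarith : 0 ≤ x) ha0.le, div_eq_mul_inv (x ^ (19 / 40 : ℝ)),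
    ← Real.rpow_neg ha0.le] at h
  calc |∑ n ∈ Ioc a b, sawtooth (x / n)| ≤ _ := h
    _ ≤ 2 * (x ^ t / a) * a + C * (x ^ t + x ^ t) := by
        gcongr
        · exact div_rpow_mul_rpow_le hx ha0 hax (by linarith) (by nlinarith)
        · exact div_rpow_mul_rpow_le hx ha0 hax (by linarith) (by nlinarith)
    _ = (2 + 2 * C) * x ^ t := by field_simp; ring

lemma abs_sum_Ioc_le_of_dyadic {f : ℕ → ℝ} {B : ℝ} {N : ℕ} (hN : 0 < N) (hone : |f 1| ≤ B)
    (hdyadic : ∀ a b : ℕ, 0 < a → a ≤ b → b ≤ 3 * a → a ≤ N → |∑ n ∈ Ioc a b, f n| ≤ B) :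
    |∑ n ∈ Ioc 0 N, f n| ≤ B * (1 + Nat.log 2 N) := by
  induction N using Nat.strong_induction_on with
  | _ N ih =>
    rcases (Nat.succ_le_of_lt hN).eq_or_lt with rfl | hN2
    · simpa using hone
    · have hlog : Nat.log 2 N = Nat.log 2 (N / 2) + 1 := Nat.log_of_one_lt_of_le one_lt_two hN2
      rw [← sum_Ioc_consecutive _ (N / 2).zero_le (N.div_le_self 2), hlog]
      calc |∑ n ∈ Ioc 0 (N / 2), f n + ∑ n ∈ Ioc (N / 2) N, f n|
          ≤ |∑ n ∈ Ioc 0 (N / 2), f n| + |∑ n ∈ Ioc (N / 2) N, f n| := abs_add_le _ _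
        _ ≤ B * (1 + Nat.log 2 (N / 2)) + B := by
            gcongr
            · exact ih (N / 2) (by lia) (by lia) fun a b ha hab hb haN =>
                hdyadic a b ha hab hb (by lia)
            · exact hdyadic (N / 2) N (by lia) (by lia) (by lia) (by lia)
        _ = B * (1 + (Nat.log 2 (N / 2) + 1 : ℕ)) := by push_cast; ring

lemma natLog_two_le_rpow_div {x κ : ℝ} {N : ℕ} (hN : 0 < N) (hNx : (N : ℝ) ^ 2 ≤ x) (hκ : 0 < κ) :
    (Nat.log 2 N : ℝ) ≤ x ^ κ / κ := by
  have hN' : (1 : ℝ) ≤ N := Nat.one_le_cast.2 hN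
  have hx : 0 < x := by nlinarith
  have hlogN : 0 ≤ Real.log N := Real.log_nonneg hN'
  calc (Nat.log 2 N : ℝ) ≤ Real.log N / Real.log 2 := Real.natLog_le_logb N 2
    _ ≤ 2 * Real.log N := by
        rw [div_le_iff₀ (by positivity)]
        nlinarith [Real.log_two_gt_d9]
    _ = Real.log ((N : ℝ) ^ 2) := by rw [Real.log_pow, Nat.cast_two]
    _ ≤ Real.log x := Real.log_le_log (by positivity) hNx
    _ ≤ x ^ κ / κ := Real.log_le_rpow_div hx.le hκ

lemma exists_abs_sum_sawtooth_div_le {θ : ℝ} (hθ : 37 / 112 < θ) :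
    ∃ C : ℝ, 0 ≤ C ∧ ∀ (x : ℝ) (N : ℕ), 0 < N → (N : ℝ) ^ 2 ≤ x →
      |∑ n ∈ Ioc 0 N, sawtooth (x / n)| ≤ C * x ^ θ := by
  obtain ⟨t, ht, htθ⟩ := exists_between (lt_min hθ (by norm_num : (37 / 112 : ℝ) < 1 / 2))
  obtain ⟨C, hC, hle⟩ := exists_abs_sum_sawtooth_div_Ioc_le ht (htθ.trans_le (min_le_right _ _)).le
  have hκ : 0 < θ - t := sub_pos.2 (htθ.trans_le (min_le_left _ _))
  refine ⟨(C + 1) * (1 + 1 / (θ - t)), by positivity, fun x N hN hNx => ?_⟩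
  have hN' : (1 : ℝ) ≤ N := Nat.one_le_cast.2 hN
  have hx : 1 ≤ x := by nlinarith
  have hxt : 1 ≤ x ^ t := Real.one_le_rpow hx (by linarith)
  have hlog : 1 + (Nat.log 2 N : ℝ) ≤ x ^ (θ - t) + x ^ (θ - t) / (θ - t) :=
    add_le_add (Real.one_le_rpow hx hκ.le) (natLog_two_le_rpow_div hN hNx hκ)
  have hone : |sawtooth (x / (1 : ℕ))| ≤ (C + 1) * x ^ t := by
    refine (abs_sawtooth_le _).trans ?_
    nlinarith
  have hdyadic (a b : ℕ) (ha : 0 < a) (hab : a ≤ b) (hb : b ≤ 3 * a) (haN : a ≤ N) :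
      |∑ n ∈ Ioc a b, sawtooth (x / n)| ≤ (C + 1) * x ^ t := by
    have hax : (a : ℝ) ^ 2 ≤ x := le_trans (by gcongr) hNx
    refine (hle x a b ha hab (by lia) hax).trans ?_
    gcongr
    linarith
  calc |∑ n ∈ Ioc 0 N, sawtooth (x / n)|
      ≤ (C + 1) * x ^ t * (1 + Nat.log 2 N) := abs_sum_Ioc_le_of_dyadic hN hone hdyadic
    _ ≤ (C + 1) * x ^ t * (x ^ (θ - t) + x ^ (θ - t) / (θ - t)) := by gcongr
    _ = (C + 1) * (1 + 1 / (θ - t)) * (x ^ t * x ^ (θ - t)) := by ring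
    _ = (C + 1) * (1 + 1 / (θ - t)) * x ^ θ := by
        rw [← Real.rpow_add (by linarith), add_sub_cancel]

/-! ### The hyperbola method and the main term -/

lemma sum_Ioc_sqrt_div_add_sq_sqrt (M : ℕ) :
    ∑ n ∈ Ioc M.sqrt M, M / n + M.sqrt ^ 2 = ∑ m ∈ Ioc 0 M.sqrt, M / m := by
  have hle : M.sqrt * M.sqrt ≤ M := Nat.sqrt_le M
  have hlt : M < (M.sqrt + 1) * (M.sqrt + 1) := Nat.lt_succ_sqrt M
  have habove : ∀ n ∈ Ioc M.sqrt M,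
      #(bipartiteAbove (fun n m => n * m ≤ M) (Ioc 0 M.sqrt) n) = M / n := by
    intro n hn
    rw [Finset.mem_Ioc] at hn
    have hn0 : 0 < n := by lia
    have hdiv : M / n ≤ M.sqrt := by
      rw [← Nat.lt_succ_iff, Nat.div_lt_iff_lt_mul hn0]
      nlinarith
    have hset : bipartiteAbove (fun n m => n * m ≤ M) (Ioc 0 M.sqrt) n = Ioc 0 (M / n) := by
      ext m
      rw [mem_bipartiteAbove, Finset.mem_Ioc, Finset.mem_Ioc, mul_comm n m,
        ← Nat.le_div_iff_mul_le hn0]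
      lia
    rw [hset, Nat.card_Ioc, Nat.sub_zero]
  have hbelow : ∀ m ∈ Ioc 0 M.sqrt,
      #(bipartiteBelow (fun n m => n * m ≤ M) (Ioc M.sqrt M) m) + M.sqrt = M / m := by
    intro m hm
    rw [Finset.mem_Ioc] at hm
    have hdiv : M.sqrt ≤ M / m := by
      rw [Nat.le_div_iff_mul_le hm.1]
      nlinarith
    have hself := Nat.div_le_self M m
    have hset : bipartiteBelow (fun n m => n * m ≤ M) (Ioc M.sqrt M) m =
        Ioc M.sqrt (M / m) := by
      ext n
      rw [mem_bipartiteBelow, Finset.mem_Ioc, Finset.mem_Ioc, ← Nat.le_div_iff_mul_le hm.1]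
      lia
    rw [hset, Nat.card_Ioc, Nat.sub_add_cancel hdiv]
  rw [← sum_congr rfl habove, sum_card_bipartiteAbove_eq_sum_card_bipartiteBelow,
    ← sum_congr rfl hbelow, sum_add_distrib, sum_const, Nat.card_Ioc, smul_eq_mul, Nat.sub_zero, sq]

lemma sum_Ioc_div_add_sq_sqrt (M : ℕ) :
    ∑ n ∈ Ioc 0 M, M / n + M.sqrt ^ 2 = 2 * ∑ n ∈ Ioc 0 M.sqrt, M / n := by
  rw [← sum_Ioc_consecutive _ M.sqrt.zero_le M.sqrt_le_self, add_assoc,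
    sum_Ioc_sqrt_div_add_sq_sqrt, two_mul]

lemma tendsto_harmonic_sub_log_sub_div (c d : ℝ) :
    Tendsto (fun n : ℕ => (harmonic n : ℝ) - Real.log n - c / n + d / (n : ℝ) ^ 2) atTop
      (nhds Real.eulerMascheroniConstant) := by
  have hsq : Tendsto (fun n : ℕ => d / (n : ℝ) ^ 2) atTop (nhds 0) :=
    tendsto_const_nhds.div_atTop ((tendsto_pow_atTop two_ne_zero).comp tendsto_natCast_atTop_atTop)
  simpa only [sub_zero, add_zero] using
    (Real.tendsto_harmonic_sub_log.sub (tendsto_const_div_atTop_nhds_zero_nat c)).add hsq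

lemma log_add_one_sub_log_le {t : ℝ} (ht : 0 < t) :
    Real.log (t + 1) - Real.log t ≤ (1 / t + 1 / (t + 1)) / 2 := by
  have hle : 1 ≤ (t + 1) / t := (one_le_div ht).2 (by linarith)
  have h := Real.self_le_sinh_iff.2 (Real.log_nonneg hle)
  rw [Real.sinh_log (by positivity), Real.log_div (by positivity) ht.ne'] at h
  refine h.trans_eq ?_
  field_simp
  ring

lemma le_log_add_one_sub_log {t : ℝ} (ht : 0 < t) :
    2 / (2 * t + 1) ≤ Real.log (t + 1) - Real.log t := by
  have h := Real.le_log_one_add_of_nonneg (one_div_nonneg.2 ht.le)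
  rw [← Real.log_div (by positivity) ht.ne', add_div, div_self ht.ne']
  refine le_of_eq_of_le ?_ h
  field_simp
  ring

lemma harmonic_sub_log_sub_le {N : ℕ} (hN : 0 < N) :
    (harmonic N : ℝ) - Real.log N - 1 / 2 / N ≤ Real.eulerMascheroniConstant := by
  set u : ℕ → ℝ := fun n => harmonic n - Real.log n - 1 / 2 / n with hu
  have hmono : Monotone fun k => u (k + N) := monotone_nat_of_le_succ fun k => by
    have h := log_add_one_sub_log_le (by positivity : (0 : ℝ) < (k + N : ℕ))
    simp only [hu, add_right_comm k 1 N, harmonic_succ]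
    push_cast at h ⊢
    linear_combination h
  have htendsto := tendsto_harmonic_sub_log_sub_div (1 / 2) 0
  simp only [zero_div, add_zero] at htendsto
  simpa only [zero_add] using hmono.ge_of_tendsto ((tendsto_add_atTop_iff_nat N).2 htendsto) 0

lemma le_harmonic_sub_log_sub_add {N : ℕ} (hN : 0 < N) :
    Real.eulerMascheroniConstant ≤
      (harmonic N : ℝ) - Real.log N - 1 / 2 / N + 1 / 8 / (N : ℝ) ^ 2 := by
  set u : ℕ → ℝ := fun n => harmonic n - Real.log n - 1 / 2 / n + 1 / 8 / (n : ℝ) ^ 2 with hu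
  have hanti : Antitone fun k => u (k + N) := antitone_nat_of_succ_le fun k => by
    set t : ℝ := ((k + N : ℕ) : ℝ) with ht
    have ht0 : 0 < t := by positivity
    have h := le_log_add_one_sub_log ht0
    have hrational : 2 / (2 * t + 1) - (1 / 2 / t + 1 / 2 / (t + 1)) +
        (1 / 8 / t ^ 2 - 1 / 8 / (t + 1) ^ 2) = 1 / (8 * t ^ 2 * (t + 1) ^ 2 * (2 * t + 1)) := by
      field_simp
      ring
    have hpos : 0 ≤ 1 / (8 * t ^ 2 * (t + 1) ^ 2 * (2 * t + 1)) := by positivity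
    simp only [hu, add_right_comm k 1 N, harmonic_succ, Rat.cast_add, Rat.cast_inv,
      Rat.cast_natCast, Nat.cast_add_one, ← ht]
    linear_combination h + hpos - hrational
  simpa only [zero_add] using hanti.le_of_tendsto
    ((tendsto_add_atTop_iff_nat N).2 (tendsto_harmonic_sub_log_sub_div (1 / 2) (1 / 8))) 0

lemma abs_harmonic_sub_le {N : ℕ} (hN : 0 < N) :
    |(harmonic N : ℝ) - Real.log N - Real.eulerMascheroniConstant - 1 / 2 / N| ≤
      1 / 8 / (N : ℝ) ^ 2 := by
  have hle := harmonic_sub_log_sub_le hN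
  have hge := le_harmonic_sub_log_sub_add hN
  have hpos : 0 ≤ 1 / 8 / (N : ℝ) ^ 2 := by positivity
  rw [abs_le]
  constructor <;> linarith

lemma sub_le_mul_log_div {x q : ℝ} (hx : 0 < x) (hq : 0 < q) : x - q ≤ x * Real.log (x / q) := by
  calc x - q = x * (1 - (x / q)⁻¹) := by field_simp
    _ ≤ x * Real.log (x / q) := by
        gcongr
        exact Real.one_sub_inv_le_log_of_pos (by positivity)

lemma mul_log_div_le {x q : ℝ} (hx : 0 < x) (hq : 0 < q) :
    x * Real.log (x / q) ≤ x - q + (x - q) ^ 2 / q := by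
  calc x * Real.log (x / q) ≤ x * (x / q - 1) := by
        gcongr
        exact Real.log_le_sub_one_of_pos (by positivity)
    _ = x - q + (x - q) ^ 2 / q := by field_simp; ring

lemma abs_main_term_sub_le {x : ℝ} {N : ℕ} (hN : 0 < N) (hlo : (N : ℝ) ^ 2 ≤ x)
    (hhi : x ≤ ((N : ℝ) + 1) ^ 2) :
    |2 * x * harmonic N - N - (N : ℝ) ^ 2 -
      (x * Real.log x + (2 * Real.eulerMascheroniConstant - 1) * x)| ≤ 10 := by
  have hN1 : (1 : ℝ) ≤ N := Nat.one_le_cast.2 hN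
  have hx : 0 < x := by nlinarith
  set R := (harmonic N : ℝ) - Real.log N - Real.eulerMascheroniConstant - 1 / 2 / N with hR
  set y := x - (N : ℝ) ^ 2 with hy
  have hR1 : |2 * x * R| ≤ 1 := by
    rw [abs_mul, abs_of_pos (by positivity)]
    calc 2 * x * |R| ≤ 2 * ((N : ℝ) + 1) ^ 2 * (1 / 8 / (N : ℝ) ^ 2) := by
          gcongr
          exact abs_harmonic_sub_le hN
      _ = (((N : ℝ) + 1) / (2 * N)) ^ 2 := by field_simp; norm_num
      _ ≤ 1 := pow_le_one₀ (by positivity) ((div_le_one (by positivity)).2 (by linarith))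
  have hy0 : 0 ≤ y / N := div_nonneg (sub_nonneg.2 hlo) (Nat.cast_nonneg N)
  have hy3 : y / N ≤ 3 := by
    rw [div_le_iff₀ (by positivity)]
    nlinarith
  have hlower := sub_le_mul_log_div hx (by positivity : 0 < (N : ℝ) ^ 2)
  have hupper := mul_log_div_le hx (by positivity : 0 < (N : ℝ) ^ 2)
  rw [← hy, ← div_pow] at hupper
  have hdecomp : 2 * x * harmonic N - N - (N : ℝ) ^ 2 -
      (x * Real.log x + (2 * Real.eulerMascheroniConstant - 1) * x) =
      2 * x * R + y / N + (y - x * Real.log (x / (N : ℝ) ^ 2)) := by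
    rw [Real.log_div hx.ne' (by positivity), Real.log_pow, hR, hy]
    push_cast
    field_simp
    ring
  have hsq : (y / N) ^ 2 ≤ 3 ^ 2 := by gcongr
  rw [hdecomp]
  rw [abs_le] at hR1 ⊢
  constructor <;> linarith

lemma sum_floor_div_eq {x : ℝ} (hx : 0 ≤ x) :
    ∑ n ∈ Icc 1 ⌊x⌋₊, (⌊x / (n : ℝ)⌋₊ : ℝ) =
      2 * x * harmonic ⌊x⌋₊.sqrt - ⌊x⌋₊.sqrt - (⌊x⌋₊.sqrt : ℝ) ^ 2 -
        2 * ∑ n ∈ Ioc 0 ⌊x⌋₊.sqrt, sawtooth (x / n) := by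
  have hhyperbola : ∑ n ∈ Ioc 0 ⌊x⌋₊, (⌊x / (n : ℝ)⌋₊ : ℝ) + (⌊x⌋₊.sqrt : ℝ) ^ 2 =
      2 * ∑ n ∈ Ioc 0 ⌊x⌋₊.sqrt, (⌊x / (n : ℝ)⌋₊ : ℝ) := by
    simp only [Nat.floor_div_natCast]
    exact_mod_cast sum_Ioc_div_add_sq_sqrt ⌊x⌋₊
  have hfloor : ∀ n ∈ Ioc 0 ⌊x⌋₊.sqrt,
      (⌊x / (n : ℝ)⌋₊ : ℝ) = x * (n : ℝ)⁻¹ - 1 / 2 - sawtooth (x / n) := fun n _ => by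
    rw [natCast_floor_eq_intCast_floor (by positivity), sawtooth, Int.fract]
    ring
  have hIcc (k : ℕ) : Icc 1 k = Ioc 0 k := rfl
  have hharmonic : (harmonic ⌊x⌋₊.sqrt : ℝ) = ∑ n ∈ Ioc 0 ⌊x⌋₊.sqrt, (n : ℝ)⁻¹ := by
    rw [harmonic_eq_sum_Icc, hIcc, Rat.cast_sum]
    simp only [Rat.cast_inv, Rat.cast_natCast]
  rw [sum_congr rfl hfloor, sum_sub_distrib, sum_sub_distrib, ← mul_sum, ← hharmonic, sum_const,
    Nat.card_Ioc, nsmul_eq_mul, Nat.sub_zero] at hhyperbola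
  rw [hIcc]
  linarith

lemma sq_sqrt_floor_le {x : ℝ} (hx : 0 ≤ x) : (⌊x⌋₊.sqrt : ℝ) ^ 2 ≤ x := by
  refine le_trans ?_ (Nat.floor_le hx)
  exact_mod_cast Nat.sqrt_le' ⌊x⌋₊

lemma le_sq_sqrt_floor_add_one (x : ℝ) : x ≤ ((⌊x⌋₊.sqrt : ℝ) + 1) ^ 2 := by
  refine (Nat.lt_floor_add_one x).le.trans ?_
  exact_mod_cast Nat.lt_succ_sqrt' ⌊x⌋₊

theorem sum_floor_div_asymptotic_general {θ : ℝ} (hθ : 37 / 112 < θ) :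
    (fun x : ℝ => (∑ n ∈ Finset.Icc 1 ⌊x⌋₊, (⌊x / (n : ℝ)⌋₊ : ℝ)) -
      (x * Real.log x + (2 * Real.eulerMascheroniConstant - 1) * x))
    =O[atTop] fun x : ℝ => x ^ θ := by
  obtain ⟨C, hC, hsawtooth⟩ := exists_abs_sum_sawtooth_div_le hθ
  refine Asymptotics.IsBigO.of_bound (2 * C + 10) ?_
  filter_upwards [eventually_ge_atTop 1] with x hx
  have hN : 0 < ⌊x⌋₊.sqrt := Nat.sqrt_pos.2 (Nat.floor_pos.2 hx)
  have hlo := sq_sqrt_floor_le (zero_le_one.trans hx)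
  have hmain := abs_main_term_sub_le hN hlo (le_sq_sqrt_floor_add_one x)
  have herror := hsawtooth x _ hN hlo
  have hpow : 1 ≤ x ^ θ := Real.one_le_rpow hx (by linarith)
  rw [sum_floor_div_eq (zero_le_one.trans hx), Real.norm_eq_abs, Real.norm_of_nonneg (by linarith)]
  rw [abs_le] at hmain herror ⊢
  constructor <;> linarith

end DivisorProblem

/-- `∑_{n ≤ x} ⌊x/n⌋ = x log x + (2γ − 1) x + O(x^{1/3})` as `x → ∞`. -/
theorem sum_floor_div_asymptotic :
    (fun x : ℝ => (∑ n ∈ Finset.Icc 1 ⌊x⌋₊, (⌊x / (n : ℝ)⌋₊ : ℝ)) -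
      (x * Real.log x + (2 * Real.eulerMascheroniConstant - 1) * x))
    =O[atTop] fun x : ℝ => x ^ ((1 : ℝ) / 3) :=
  DivisorProblem.sum_floor_div_asymptotic_general (by norm_num)
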